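/- Under Conditions (A)–(D) with b_j ≠ 0 for all j ≥ 1, let u₀ be a random variable in H, independent of {η_k}, whose law is supported by 𝒜, let 𝐇 = H^{ℤ₊} carry the Tikhonov (product) topology, and define the random probability measures 𝜻_k = k⁻¹ Σ_{n=0}^{k−1} δ_{𝐮_n} on 𝐇, where 𝐮_n = (u_j, j ≥ n). Then the family {𝜻_k, k ≥ 1} satisfies the large deviation principle with a good rate function 𝐈 : 𝒫(𝐇) → [0,+∞] which is equal to +∞ outside a compact subset of 𝒫(𝐇). -/

import Mathlib

open MeasureTheory ProbabilityTheory Filter Topology BoundedContinuousFunction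
open scoped ENNReal NNReal Pointwise

noncomputable section

/-- The sets `𝒜_k(B)`: `𝒜_0(B) = B`, `𝒜_k(B) = S(𝒜_{k-1}(B)) + 𝒦`. -/
def attain {H : Type*} [AddCommGroup H] (S : H → H) (K : Set H) (B : Set H) : ℕ → Set H
  | 0 => B
  | n + 1 => S '' attain S K B n + K

/-- The domain of attainability `𝒜(B)` from `B`: the closure of `⋃_k 𝒜_k(B)`. -/
def attainDom {H : Type*} [AddCommGroup H] [TopologicalSpace H]
    (S : H → H) (K : Set H) (B : Set H) : Set H :=
  closure (⋃ n, attain S K B n)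

variable {H : Type} [NormedAddCommGroup H] [InnerProductSpace ℝ H] [CompleteSpace H]

/-- The orthogonal projection `𝖯_N` onto the span of the first `N` vectors of an orthonormal
basis. -/
def projB (e : HilbertBasis ℕ ℝ H) (N : ℕ) (u : H) : H :=
  ∑ j ∈ Finset.range N, e.repr u j • (e j : H)

/-- Condition (A): regularity and stability. -/
def CondA (S : H → H) : Prop :=
  ContDiff ℝ 1 S ∧
  ∀ R r : ℝ, 0 < r → r < R →
    ∃ C : ℝ, 0 < C ∧ ∃ a : ℝ, 0 < a ∧ a < 1 ∧ ∃ n₀ : ℕ, 1 ≤ n₀ ∧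
      (∀ u₁ ∈ Metric.closedBall (0 : H) R, ∀ u₂ ∈ Metric.closedBall (0 : H) R,
          ‖S u₁ - S u₂‖ ≤ C * ‖u₁ - u₂‖) ∧
      ∀ u ∈ Metric.closedBall (0 : H) R, ∀ n : ℕ, n₀ ≤ n →
          ‖S^[n] u‖ ≤ max (a * ‖u‖) r

/-- Condition (B): dissipativity. -/
def CondB (S : H → H) (K : Set H) : Prop :=
  ∃ ρ : ℝ, 0 < ρ ∧ ∃ k₀ : ℝ → ℕ, Monotone k₀ ∧
    ∀ R : ℝ, 0 ≤ R → ∀ k : ℕ, k₀ R ≤ k →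
      attain S K (Metric.closedBall 0 R) k ⊆ Metric.closedBall (0 : H) ρ

/-- Condition (C): squeezing. -/
def CondC (S : H → H) (e : HilbertBasis ℕ ℝ H) : Prop :=
  ∀ R : ℝ, 0 < R → ∃ γ : ℕ → ℝ, (∀ N, 0 < γ N) ∧ Antitone γ ∧
    Tendsto γ atTop (𝓝 0) ∧
    ∀ N : ℕ, ∀ u₁ ∈ Metric.closedBall (0 : H) R, ∀ u₂ ∈ Metric.closedBall (0 : H) R,
      ‖(S u₁ - S u₂) - projB e N (S u₁ - S u₂)‖ ≤ γ N * ‖u₁ - u₂‖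

/-- Condition (D): structure of the noise, `η_k = ∑_j b_j ξ_{jk} e_j` with `∑ b_j² < ∞`,
independent scalar `ξ_{jk}` whose laws have Lipschitz densities `p_j` with `p_j(0) > 0` and
support in `[-1,1]`. -/
def CondD [MeasurableSpace H] {Ω : Type*} [MeasurableSpace Ω] (P : Measure Ω)
    (e : HilbertBasis ℕ ℝ H) (η : ℕ → Ω → H)
    (b : ℕ → ℝ) (ξ : ℕ → ℕ → Ω → ℝ) (p : ℕ → ℝ → ℝ) : Prop :=
  (∀ j, 0 ≤ b j) ∧ Summable (fun j => (b j) ^ 2) ∧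
  (∀ k ω, HasSum (fun j => (b j * ξ j k ω) • (e j : H)) (η k ω)) ∧
  (∀ j k, Measurable (ξ j k)) ∧
  iIndepFun (fun jk : ℕ × ℕ => ξ jk.1 jk.2) P ∧
  (∀ j k, Measure.map (ξ j k) P
      = (volume : Measure ℝ).withDensity fun x => ENNReal.ofReal (p j x)) ∧
  (∀ j, ∃ L : ℝ≥0, LipschitzWith L (p j)) ∧
  (∀ j, 0 < p j 0) ∧
  (∀ j, Function.support (p j) ⊆ Set.Icc (-1 : ℝ) 1)

/-- The trajectory `u_k = S(u_{k-1}) + η_k` of the random dynamical system issued from `u₀`. -/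
def traj {Ω : Type*} (S : H → H) (η : ℕ → Ω → H) (u₀ : Ω → H) : ℕ → Ω → H
  | 0 => u₀
  | k + 1 => fun ω => S (traj S η u₀ k ω) + η (k + 1) ω

/-- The (topological) support of a measure. -/
def msupp {X : Type*} [TopologicalSpace X] [MeasurableSpace X] (μ : Measure X) : Set X :=
  {x | ∀ U ∈ 𝓝 x, 0 < μ U}

/-- The occupation measures `ζ_k = k⁻¹ ∑_{n=0}^{k-1} δ_{x_n}` of a sequence. -/
def occ {X : Type*} [MeasurableSpace X] (x : ℕ → X) (k : ℕ) : ProbabilityMeasure X :=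
  if hk : k = 0 then ⟨Measure.dirac (x 0), Measure.dirac.isProbabilityMeasure⟩
  else
    ⟨(k : ℝ≥0∞)⁻¹ • ∑ n ∈ Finset.range k, Measure.dirac (x n), by
      refine ⟨?_⟩
      simp only [Measure.smul_apply, Measure.finset_sum_apply, measure_univ,
        Finset.sum_const, Finset.card_range, nsmul_eq_mul, mul_one, smul_eq_mul]
      exact ENNReal.inv_mul_cancel (Nat.cast_ne_zero.mpr hk) (ENNReal.natCast_ne_top k)⟩

/-- Large deviation principle for the sequence of events `prob k` (the laws of random
probability measures in `Z`), with rate function `I`. -/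
def LDPof {Z : Type*} [TopologicalSpace Z] (prob : ℕ → Set Z → ℝ≥0∞) (I : Z → ℝ≥0∞) : Prop :=
  (∀ F : Set Z, IsClosed F →
    Filter.limsup (fun k : ℕ => (((k : ℝ)⁻¹ : ℝ) : EReal) * ENNReal.log (prob k F)) atTop
      ≤ -(⨅ σ ∈ F, (I σ : EReal))) ∧
  (∀ G : Set Z, IsOpen G →
    -(⨅ σ ∈ G, (I σ : EReal))
      ≤ Filter.liminf (fun k : ℕ => (((k : ℝ)⁻¹ : ℝ) : EReal) * ENNReal.log (prob k G)) atTop)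

/-- A good rate function: lower semicontinuous with compact level sets. -/
def GoodRate {Z : Type*} [TopologicalSpace Z] (I : Z → ℝ≥0∞) : Prop :=
  LowerSemicontinuous I ∧ ∀ c : ℝ≥0∞, c ≠ ⊤ → IsCompact {σ : Z | I σ ≤ c}



lemma growthSup_eq (u : ℕ → ℝ≥0∞) :
    Filter.limsup (fun k : ℕ => (((k : ℝ)⁻¹ : ℝ) : EReal) * ENNReal.log (u k)) atTop
      = ExpGrowth.expGrowthSup u := by
  rw [ExpGrowth.expGrowthSup_def]
  congr 1
  ext k
  rw [EReal.div_eq_inv_mul, EReal.coe_inv]; rfl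

lemma growthInf_eq (u : ℕ → ℝ≥0∞) :
    Filter.liminf (fun k : ℕ => (((k : ℝ)⁻¹ : ℝ) : EReal) * ENNReal.log (u k)) atTop
      = ExpGrowth.expGrowthInf u := by
  rw [ExpGrowth.expGrowthInf_def]
  congr 1
  ext k
  rw [EReal.div_eq_inv_mul, EReal.coe_inv]; rfl

/-- The abstract local LDP criterion on a compact set. -/
lemma ldp_abstract {Z : Type*} [TopologicalSpace Z] (prob : ℕ → Set Z → ℝ≥0∞)
    (hmono : ∀ k A B, A ⊆ B → prob k A ≤ prob k B)
    (hunion : ∀ k A B, prob k (A ∪ B) ≤ prob k A + prob k B)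
    (hle : ∀ k A, prob k A ≤ 1) (C : Set Z) (hC : IsCompact C) (hCc : IsClosed C)
    (hnull : ∀ k, prob k Cᶜ = 0)
    (hloc : ∀ σ ∈ C, ∀ G : Set Z, IsOpen G → σ ∈ G → ∀ J : ℝ,
      (∀ G' : Set Z, IsOpen G' → σ ∈ G' →
        (J : EReal) ≤ ExpGrowth.expGrowthSup (fun k => prob k G')) →
      (J : EReal) ≤ ExpGrowth.expGrowthInf (fun k => prob k G)) :
    ∃ I : Z → ℝ≥0∞, GoodRate I ∧ (∃ C : Set Z, IsCompact C ∧ ∀ σ ∉ C, I σ = ⊤) ∧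
      LDPof prob I := by
  set s : Set Z → EReal := fun G => ExpGrowth.expGrowthSup (fun k => prob k G) with hs
  have hs0 : ∀ G, s G ≤ 0 := by
    intro G
    refine (ExpGrowth.expGrowthSup_monotone (b := fun _ => 1) (fun k => hle k G)).trans ?_
    rw [ExpGrowth.expGrowthSup_const one_ne_zero ENNReal.one_ne_top]
  set J : Z → EReal := fun σ => ⨅ G : {G : Set Z // IsOpen G ∧ σ ∈ G}, s G.1 with hJ
  have hJ0 : ∀ σ, 0 ≤ - J σ := by
    intro σ
    have : J σ ≤ 0 := (iInf_le _ ⟨Set.univ, isOpen_univ, Set.mem_univ _⟩).trans (hs0 _)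
    simpa using EReal.neg_le_neg_iff.2 this
  set I : Z → ℝ≥0∞ := fun σ => (- J σ).toENNReal with hI
  have hIJ : ∀ σ, (I σ : EReal) = - J σ := fun σ => EReal.coe_toENNReal (hJ0 σ)
  have hJs : ∀ σ G, IsOpen G → σ ∈ G → J σ ≤ s G := fun σ G h1 h2 => iInf_le _ (⟨G, h1, h2⟩ : {G : Set Z // IsOpen G ∧ σ ∈ G})
  have hlsc : LowerSemicontinuous I := by
    intro σ c hc
    have hc' : (c : EReal) < - J σ := by rw [← hIJ]; exact_mod_cast hc
    have : J σ < -(c : EReal) := EReal.lt_neg_comm.1 hc'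
    obtain ⟨⟨G, hGo, hσ⟩, hG⟩ := iInf_lt_iff.1 this
    filter_upwards [hGo.mem_nhds hσ] with τ hτ
    have h1 : (c : EReal) < - J τ := EReal.lt_neg_comm.1 ((hJs τ G hGo hτ).trans_lt hG)
    rw [← hIJ] at h1; exact_mod_cast h1
  have hout : ∀ σ ∉ C, I σ = ⊤ := by
    intro σ hσ
    have h1 : J σ ≤ ⊥ := by
      refine (hJs σ Cᶜ hCc.isOpen_compl hσ).trans ?_
      have : (fun k => prob k Cᶜ) = 0 := funext hnull
      simp only [hs, this, ExpGrowth.expGrowthSup_zero, le_refl]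
    have h2 : (I σ : EReal) = ⊤ := by rw [hIJ, le_bot_iff.1 h1]; rfl
    exact EReal.coe_ennreal_eq_top_iff.1 h2
  refine ⟨I, ⟨hlsc, ?_⟩, ⟨C, hC, hout⟩, ?_, ?_⟩
  · intro c hc
    refine hC.of_isClosed_subset (hlsc.isClosed_preimage c) ?_
    intro σ hσ
    by_contra h
    have := hout σ h
    simp only [Set.mem_ofPred_eq, this, top_le_iff] at hσ
    exact hc hσ
  · intro F hF
    rw [growthSup_eq]
    refine EReal.le_of_forall_lt_iff_le.1 ?_
    intro z hz
    have h1 : ∀ σ ∈ F ∩ C, ∃ G : Set Z, IsOpen G ∧ σ ∈ G ∧ s G ≤ z := by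
      intro σ hσ
      have : J σ < z := by
        refine lt_of_le_of_lt ?_ hz
        rw [EReal.le_neg, ← hIJ]
        exact iInf₂_le σ hσ.1
      obtain ⟨⟨G, hGo, hσ⟩, hG⟩ := iInf_lt_iff.1 this
      exact ⟨G, hGo, hσ, hG.le⟩
    choose! G hGo hGm hGs using h1
    obtain ⟨t, htF, htc⟩ := (hC.inter_left hF).elim_nhds_subcover G
      (fun σ hσ => (hGo σ hσ).mem_nhds (hGm σ hσ))
    have hbd : ∀ k, prob k F ≤ ∑ σ ∈ t, prob k (G σ) := by
      intro k
      have h2 : ∀ t : Finset Z, prob k (⋃ σ ∈ t, G σ) ≤ prob k ∅ + ∑ σ ∈ t, prob k (G σ) := by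
        classical
        intro t
        induction t using Finset.induction_on with
        | empty => simp
        | insert a t ha ih =>
          rw [Finset.set_biUnion_insert, Finset.sum_insert ha]
          refine (hunion _ _ _).trans ?_
          refine (add_le_add_right ih _).trans (le_of_eq (by ring))
      have h3 : prob k ∅ = 0 := le_antisymm ((hmono k _ _ (Set.empty_subset _)).trans (hnull k).le) bot_le
      calc prob k F ≤ prob k ((⋃ σ ∈ t, G σ) ∪ Cᶜ) := by
            apply hmono
            intro σ hσ
            by_cases h : σ ∈ C
            · exact Or.inl (htc ⟨hσ, h⟩)
            · exact Or.inr h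
        _ ≤ _ := hunion _ _ _
        _ ≤ _ := by rw [hnull, add_zero]; refine (h2 t).trans (by rw [h3, zero_add])
    refine (ExpGrowth.expGrowthSup_monotone (b := fun k => ∑ σ ∈ t, prob k (G σ)) hbd).trans ?_
    have h4 : (fun k => ∑ σ ∈ t, prob k (G σ)) = ∑ σ ∈ t, (fun k => prob k (G σ)) := by
      ext k; simp
    rw [h4, ExpGrowth.expGrowthSup_sum]
    exact iSup₂_le fun σ hσ => hGs σ (htF σ hσ)
  · intro G hG
    rw [growthInf_eq, EReal.neg_le]
    refine le_iInf₂ fun σ hσ => ?_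
    rw [EReal.neg_le]
    by_cases hC' : σ ∈ C
    · by_cases hIt : I σ = ⊤
      · rw [hIt]; simp
      · have h5 : ((-(I σ).toReal : ℝ) : EReal) = -(I σ : EReal) := by
          rw [EReal.coe_neg, EReal.coe_ennreal_toReal hIt]
        rw [← h5]
        refine hloc σ hC' G hG hσ _ ?_
        intro G' h1 h2
        rw [h5, hIJ, neg_neg]
        exact hJs σ G' h1 h2
    · rw [hout σ hC']; simp

set_option linter.unusedSectionVars false

/-- iterated conditional expectations of a functional of the (reversed) history -/
def Rop [MeasurableSpace H] (S : H → H) (ν : Measure H) (Ψ : List H → ℝ) : ℕ → H → List H → ℝ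
  | 0, x, l => Ψ (x :: l)
  | n + 1, x, l => ∫ h, Rop S ν Ψ n (S x + h) (x :: l) ∂ν

/-- Class of functionals on finite histories. -/
structure GoodPsi [MeasurableSpace H] (Ψ : List H → ℝ) (L c c' : ℝ) : Prop where
  hL : 0 ≤ L
  hc : 0 ≤ c
  hc' : 0 ≤ c'
  pos : ∀ l, 0 < Ψ l
  le1 : ∀ l, Ψ l ≤ 1
  meas : ∀ {α : Type} [MeasurableSpace α] (fs : List (α → H)), (∀ f ∈ fs, Measurable f) →
    Measurable (fun a => Ψ (fs.map (fun f => f a)))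
  lip : ∀ l₁ l₂ x y, Ψ (l₁ ++ x :: l₂) ≤ Real.exp (L * ‖x - y‖) * Ψ (l₁ ++ y :: l₂)
  ins1 : ∀ l₁ l₂ y, Ψ (l₁ ++ y :: l₂) ≤ Real.exp c * Ψ (l₁ ++ l₂)
  ins2 : ∀ l₁ l₂ y, Ψ (l₁ ++ l₂) ≤ Real.exp c * Ψ (l₁ ++ y :: l₂)
  cat : ∀ l₁ l₂, Ψ l₁ * Ψ l₂ ≤ Real.exp c' * Ψ (l₁ ++ l₂)

section Rops
variable [MeasurableSpace H] [BorelSpace H] [SecondCountableTopology H]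
  {S : H → H} {ν : Measure H} [IsProbabilityMeasure ν] {Ψ : List H → ℝ} {L c c' : ℝ}

lemma Rop_meas (hS : Measurable S) (hΨ : GoodPsi Ψ L c c') (n : ℕ) :
    ∀ {α : Type} [MeasurableSpace α] (x : α → H) (fs : List (α → H)), Measurable x →
      (∀ f ∈ fs, Measurable f) →
      Measurable (fun a => Rop S ν Ψ n (x a) (fs.map (fun f => f a))) := by
  induction n with
  | zero =>
    intro α _ x fs hx hfs
    exact hΨ.meas (x :: fs) (by simpa using ⟨hx, hfs⟩)
  | succ n ih =>
    intro α _ x fs hx hfs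
    have h1 := ih (α := α × H) (fun p => S (x p.1) + p.2)
      ((fun p => x p.1) :: fs.map (fun f => fun p : α × H => f p.1))
      (by fun_prop)
      (by
        intro f hf
        simp only [List.mem_cons, List.mem_map] at hf
        rcases hf with rfl | ⟨g, hg, rfl⟩
        · exact hx.comp measurable_fst
        · exact (hfs g hg).comp measurable_fst)
    have h2 := (h1.stronglyMeasurable).integral_prod_right' (ν := ν)
    simpa [Rop, List.map_map, Function.comp_def] using h2.measurable

lemma Rop_meas' (hS : Measurable S) (hΨ : GoodPsi Ψ L c c') (n : ℕ) (x : H) (l : List H) :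
    Measurable (fun h => Rop S ν Ψ n (x + h) l) := by
  have := Rop_meas (ν := ν) hS hΨ n (α := H) (fun h => x + h) (l.map (fun y => fun _ => y))
    (by fun_prop) (by intro f hf; simp only [List.mem_map] at hf; obtain ⟨y, _, rfl⟩ := hf; fun_prop)
  simpa [List.map_map, Function.comp_def] using this

lemma Rop_meas'' (hS : Measurable S) (hΨ : GoodPsi Ψ L c c') (n : ℕ) (l : List H) :
    Measurable (fun h => Rop S ν Ψ n h l) := by
  simpa using Rop_meas' (ν := ν) hS hΨ n 0 l

lemma Rop_bd (hΨ : GoodPsi Ψ L c c') (n : ℕ) : ∀ (x : H) (l : List H),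
    0 ≤ Rop S ν Ψ n x l ∧ Rop S ν Ψ n x l ≤ 1 := by
  induction n with
  | zero => intro x l; exact ⟨(hΨ.pos _).le, hΨ.le1 _⟩
  | succ n ih =>
    intro x l
    refine ⟨integral_nonneg fun h => (ih _ _).1, ?_⟩
    have := integral_mono_of_nonneg (μ := ν) (Eventually.of_forall fun h => (ih (S x + h) (x :: l)).1)
      (integrable_const (1 : ℝ)) (Eventually.of_forall fun h => (ih (S x + h) (x :: l)).2)
    simpa [Rop] using this

lemma Rop_int (hS : Measurable S) (hΨ : GoodPsi Ψ L c c') (n : ℕ) (x : H) (l : List H) :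
    Integrable (fun h => Rop S ν Ψ n (x + h) l) ν := by
  refine Integrable.of_bound (Rop_meas' hS hΨ n x l).aestronglyMeasurable 1
    (Eventually.of_forall fun h => ?_)
  rw [Real.norm_eq_abs, abs_of_nonneg (Rop_bd hΨ n _ _).1]
  exact (Rop_bd hΨ n _ _).2

lemma Rop_mono (hS : Measurable S) (hΨ : GoodPsi Ψ L c c') (n : ℕ) (a : ℝ) :
    ∀ (l l' : List H), (∀ l₁, Ψ (l₁ ++ l) ≤ a * Ψ (l₁ ++ l')) → ∀ x,
    Rop S ν Ψ n x l ≤ a * Rop S ν Ψ n x l' := by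
  induction n with
  | zero => intro l l' h x; exact h [x]
  | succ n ih =>
    intro l l' hl x
    simp only [Rop]
    rw [← integral_const_mul]
    refine integral_mono (Rop_int hS hΨ n _ _) ((Rop_int hS hΨ n _ _).const_mul _) fun h => ?_
    refine ih _ _ (fun l₁ => ?_) _
    simpa using hl (l₁ ++ [x])

lemma Rop_cat (hS : Measurable S) (hΨ : GoodPsi Ψ L c c') (n : ℕ) :
    ∀ (l l' : List H) (x : H),
    Rop S ν Ψ n x l * Ψ l' ≤ Real.exp c' * Rop S ν Ψ n x (l ++ l') := by
  induction n with
  | zero => intro l l' x; simpa [Rop] using hΨ.cat (x :: l) l'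
  | succ n ih =>
    intro l l' x
    simp only [Rop]
    rw [← integral_const_mul, ← integral_mul_const]
    refine integral_mono ((Rop_int hS hΨ n _ _).mul_const _)
      ((Rop_int hS hΨ n _ _).const_mul _) fun h => ?_
    exact ih _ _ _

lemma Rop_succ_le (hS : Measurable S) (hΨ : GoodPsi Ψ L c c') (n : ℕ) :
    ∀ (x : H) (l : List H), Rop S ν Ψ (n + 1) x l ≤ Real.exp c * Rop S ν Ψ n x l := by
  induction n with
  | zero =>
    intro x l
    have : ∫ h, Rop S ν Ψ 0 (S x + h) (x :: l) ∂ν ≤ ∫ h, Real.exp c * Ψ (x :: l) ∂ν :=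
      integral_mono (Rop_int hS hΨ 0 _ _) (integrable_const _) fun h => hΨ.ins1 [] _ _
    simpa [Rop] using this
  | succ n ih =>
    intro x l
    rw [Rop, Rop, ← integral_const_mul]
    exact integral_mono (Rop_int hS hΨ _ _ _) ((Rop_int hS hΨ _ _ _).const_mul _) fun h => ih _ _

lemma Rop_le_succ (hS : Measurable S) (hΨ : GoodPsi Ψ L c c') (n : ℕ) :
    ∀ (x : H) (l : List H), Rop S ν Ψ n x l ≤ Real.exp c * Rop S ν Ψ (n + 1) x l := by
  induction n with
  | zero =>
    intro x l
    have : ∫ h, Ψ (x :: l) ∂ν ≤ ∫ h, Real.exp c * Rop S ν Ψ 0 (S x + h) (x :: l) ∂ν :=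
      integral_mono (integrable_const _) ((Rop_int hS hΨ 0 _ _).const_mul _)
        fun h => hΨ.ins2 [] _ _
    rw [integral_const_mul] at this
    simpa [Rop] using this
  | succ n ih =>
    intro x l
    rw [Rop, Rop, ← integral_const_mul]
    exact integral_mono (Rop_int hS hΨ _ _ _) ((Rop_int hS hΨ _ _ _).const_mul _) fun h => ih _ _

lemma Rop_pos (hS : Measurable S) (hΨ : GoodPsi Ψ L c c') (n : ℕ) (x : H) (l : List H) :
    0 < Rop S ν Ψ n x l := by
  induction n with
  | zero => exact hΨ.pos _
  | succ n ih =>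
    have h1 := Rop_le_succ (ν := ν) hS hΨ n x l
    have h2 := ih.trans_le h1
    exact pos_of_mul_pos_right h2 (Real.exp_pos _).le

/-- One-step smoothing property. -/
def OneStep (S : H → H) (ν : Measure H) (A : Set H) : Prop :=
  ∀ γ : ℝ, 0 < γ → ∃ CN : ℝ, 0 ≤ CN ∧ ∀ (f : H → ℝ) (M D : ℝ), Measurable f → 0 ≤ M → 0 ≤ D →
    (∀ x ∈ A, 0 ≤ f x ∧ f x ≤ M) → (∀ x ∈ A, ∀ y ∈ A, f x ≤ f y + D * ‖x - y‖) →
    ∀ x ∈ A, ∀ y ∈ A, ∫ h, f (S x + h) ∂ν ≤ ∫ h, f (S y + h) ∂ν + (M * CN + D * γ) * ‖x - y‖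

lemma exp_lip_aux {a b t W : ℝ} (ht : 0 ≤ t) (h : a ≤ Real.exp t * b) (haW : a ≤ W) (ha : 0 ≤ a) :
    a ≤ b + t * W := by
  have h1 : Real.exp (-t) * a ≤ b := by
    have := mul_le_mul_of_nonneg_left h (Real.exp_pos (-t)).le
    rwa [← mul_assoc, ← Real.exp_add, neg_add_cancel, Real.exp_zero, one_mul] at this
  have h2 : 1 - t ≤ Real.exp (-t) := by linarith [Real.add_one_le_exp (-t)]
  nlinarith [mul_le_mul_of_nonneg_right h2 ha, mul_le_mul_of_nonneg_left haW ht]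

lemma Rop_feller (hS : Measurable S) (hΨ : GoodPsi Ψ L c c') {A : Set H}
    (hO : OneStep S ν A) : ∃ C : ℝ, 0 < C ∧ ∀ (n : ℕ) (l : List H) (W : ℝ),
      (∀ z ∈ A, Rop S ν Ψ n z l ≤ W) → ∀ x ∈ A, ∀ y ∈ A,
      Rop S ν Ψ n x l ≤ Rop S ν Ψ n y l + C * W * ‖x - y‖ := by
  set E := Real.exp c * Real.exp c with hE
  have hEp : 0 < E := by positivity
  obtain ⟨CN, hCN, hone⟩ := hO (E⁻¹ / 2) (by positivity)
  have hL := hΨ.hL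
  refine ⟨2 * (L + E * CN) + 1, by positivity, ?_⟩
  set C := 2 * (L + E * CN) + 1 with hC
  have hCL : L ≤ C := by nlinarith [mul_nonneg hEp.le hCN]
  have hC0 : 0 ≤ C := hL.trans hCL
  intro n
  induction n with
  | zero =>
    intro l W hW x hx y hy
    have h1 : Ψ (x :: l) ≤ Real.exp (L * ‖x - y‖) * Ψ (y :: l) := hΨ.lip [] l x y
    have h2 := exp_lip_aux (by positivity) h1 (hW x hx) (hΨ.pos _).le
    have hW0 : 0 ≤ W := (Rop_bd hΨ 0 _ _).1.trans (hW x hx)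
    have h3 : L * (W * ‖x - y‖) ≤ C * (W * ‖x - y‖) := by gcongr
    simp only [Rop]
    nlinarith
  | succ n ih =>
    intro l W hW x hx y hy
    have hW0 : 0 ≤ W := (Rop_bd hΨ (n+1) _ _).1.trans (hW x hx)
    set f : H → ℝ := fun z => Rop S ν Ψ n z (y :: l) with hf
    have hfW : ∀ z ∈ A, f z ≤ E * W := by
      intro z hz
      have h1 : f z ≤ Real.exp c * Rop S ν Ψ n z l :=
        Rop_mono hS hΨ n _ _ _ (fun l₁ => hΨ.ins1 l₁ l y) z
      have h2 := Rop_le_succ (ν := ν) hS hΨ n z l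
      calc f z ≤ Real.exp c * (Real.exp c * W) := by
            refine h1.trans ?_
            gcongr
            exact h2.trans (by gcongr; exact hW z hz)
        _ = _ := by ring
    have h1 : Rop S ν Ψ (n+1) x l ≤ Real.exp (L * ‖x - y‖) * ∫ h, f (S x + h) ∂ν := by
      rw [Rop, ← integral_const_mul]
      refine integral_mono (Rop_int hS hΨ _ _ _) ((Rop_int hS hΨ _ _ _).const_mul _) fun h => ?_
      exact Rop_mono hS hΨ n _ _ _ (fun l₁ => hΨ.lip l₁ l x y) _
    have h2 := exp_lip_aux (by positivity) h1 (hW x hx) (Rop_bd hΨ _ _ _).1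
    have h3 := hone f (E * W) (C * (E * W)) (Rop_meas'' hS hΨ n _) (by positivity) (by positivity)
      (fun z hz => ⟨(Rop_bd hΨ _ _ _).1, hfW z hz⟩)
      (fun z hz z' hz' => ih (y :: l) (E * W) hfW z hz z' hz') x hx y hy
    have h4 : ∫ h, f (S y + h) ∂ν = Rop S ν Ψ (n + 1) y l := rfl
    rw [h4] at h3
    have h5 : C * (E * W) * (E⁻¹ / 2) = C * W / 2 := by field_simp
    rw [h5] at h3
    have h6 : L * ‖x - y‖ * W + (E * W * CN + C * W / 2) * ‖x - y‖ ≤ C * W * ‖x - y‖ := by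
      have : 0 ≤ W * ‖x - y‖ := by positivity
      have h7 : L + E * CN + C / 2 ≤ C := by rw [hC]; linarith
      nlinarith [mul_le_mul_of_nonneg_right h7 this]
    linarith

end Rops

set_option linter.unusedSectionVars false
section Rlim
variable [MeasurableSpace H] [BorelSpace H] [SecondCountableTopology H]
  {S : H → H} {ν : Measure H} [IsProbabilityMeasure ν] {Ψ : List H → ℝ} {L c c' : ℝ}

/-- The Markov operator. -/
def Top1 (S : H → H) (ν : Measure H) (f : H → ℝ) (x : H) : ℝ := ∫ h, f (S x + h) ∂ν

/-- Uniform irreducibility. -/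
def Doeblin (S : H → H) (ν : Measure H) (A : Set H) : Prop :=
  ∀ ε : ℝ, 0 < ε → ∃ p : ℝ, 0 < p ∧ ∃ M : ℕ, ∀ x ∈ A, ∀ y ∈ A, ∃ j ≤ M, ∀ (f : H → ℝ) (β : ℝ),
    Measurable f → (∀ z, 0 ≤ f z) → (∀ z, f z ≤ 1) → 0 ≤ β →
    (∀ z ∈ A, ‖z - y‖ < ε → β ≤ f z) → p * β ≤ ((Top1 S ν)^[j] f) x

lemma Top1_nonneg {f : H → ℝ} (hf : ∀ z, 0 ≤ f z) (j : ℕ) : ∀ z, 0 ≤ ((Top1 S ν)^[j] f) z := by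
  induction j with
  | zero => exact hf
  | succ j ih =>
    intro z
    rw [Function.iterate_succ_apply']
    exact integral_nonneg fun h => ih _

lemma psi_nil_le (hΨ : GoodPsi Ψ L c c') (l : List H) :
    ∀ l₁, Ψ (l₁ ++ []) ≤ Real.exp c ^ l.length * Ψ (l₁ ++ l) := by
  induction l with
  | nil => intro l₁; simp
  | cons a l ih =>
    intro l₁
    refine (ih l₁).trans ?_
    rw [List.length_cons, pow_succ, mul_assoc]
    gcongr
    exact hΨ.ins2 _ _ _

lemma Rop_T (hS : Measurable S) (hΨ : GoodPsi Ψ L c c') (n j : ℕ) : ∀ (x : H) (l : List H),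
    ((Top1 S ν)^[j] (fun z => Rop S ν Ψ n z [])) x ≤
      Real.exp c ^ (l.length + j) * Rop S ν Ψ (n + j) x l := by
  induction j with
  | zero =>
    intro x l
    exact Rop_mono hS hΨ n _ _ _ (psi_nil_le hΨ l) x
  | succ j ih =>
    intro x l
    rw [Function.iterate_succ_apply', ← add_assoc n j 1, Rop, ← integral_const_mul]
    refine integral_mono_of_nonneg (Eventually.of_forall fun h =>
      Top1_nonneg (fun z => (Rop_bd hΨ n z []).1) j _) ((Rop_int hS hΨ _ _ _).const_mul _)
      (Eventually.of_forall fun h => ?_)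
    have := ih (S x + h) (x :: l)
    simp only [List.length_cons] at this
    rw [show l.length + (j + 1) = l.length + 1 + j by ring]
    exact this

lemma Rop_add_le (hS : Measurable S) (hΨ : GoodPsi Ψ L c c') (n j : ℕ) (x : H) (l : List H) :
    Rop S ν Ψ (n + j) x l ≤ Real.exp c ^ j * Rop S ν Ψ n x l := by
  induction j with
  | zero => simp
  | succ j ih =>
    refine (Rop_succ_le hS hΨ (n + j) x l).trans ?_
    rw [pow_succ', mul_assoc]
    gcongr

lemma Rop_compare (hS : Measurable S) (hΨ : GoodPsi Ψ L c c') {A : Set H} (hA : IsCompact A)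
    (hO : OneStep S ν A) (hDo : Doeblin S ν A) :
    ∃ c₀ : ℝ, 1 ≤ c₀ ∧ ∀ n, ∀ x ∈ A, ∀ y ∈ A, Rop S ν Ψ n y [] ≤ c₀ * Rop S ν Ψ n x [] := by
  obtain ⟨C, hC, hF⟩ := Rop_feller hS hΨ hO
  obtain ⟨p, hp, M, hM⟩ := hDo (1 / (2 * C)) (by positivity)
  have hE1 : 1 ≤ Real.exp c := Real.one_le_exp hΨ.hc
  set q := (Real.exp c ^ M * Real.exp c ^ M) * (2 / p) with hq
  refine ⟨max 1 q, le_max_left _ _, ?_⟩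
  intro n x hx y hy
  have hcont : ContinuousOn (fun z => Rop S ν Ψ n z []) A := by
    have : LipschitzOnWith (Real.toNNReal C) (fun z => Rop S ν Ψ n z []) A := by
      refine LipschitzOnWith.of_le_add_mul _ fun a ha b hb => ?_
      rw [Real.coe_toNNReal _ hC.le, dist_eq_norm]
      have := hF n [] 1 (fun z _ => (Rop_bd hΨ n z []).2) a ha b hb
      simpa using this
    exact this.continuousOn
  obtain ⟨ys, hys, hmax⟩ := hA.exists_isMaxOn ⟨x, hx⟩ hcont
  set W := Rop S ν Ψ n ys [] with hW
  have hW0 : 0 ≤ W := (Rop_bd hΨ n ys []).1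
  have hWm : ∀ z ∈ A, Rop S ν Ψ n z [] ≤ W := fun z hz => hmax hz
  obtain ⟨j, hj, hjf⟩ := hM x hx ys hys
  have h1 := hjf (fun z => Rop S ν Ψ n z []) (W / 2) (Rop_meas'' hS hΨ n [])
    (fun z => (Rop_bd hΨ n z []).1) (fun z => (Rop_bd hΨ n z []).2) (by positivity) (by
      intro z hz hzy
      have h2 := hF n [] W hWm ys hys z hz
      rw [norm_sub_rev] at hzy
      have h3 : C * W * ‖ys - z‖ ≤ C * W * (1 / (2 * C)) := by gcongr
      have h4 : C * W * (1 / (2 * C)) = W / 2 := by field_simp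
      linarith)
  have h2 := Rop_T (ν := ν) hS hΨ n j x []
  have h3 := Rop_add_le (ν := ν) hS hΨ n j x []
  have hR0 := (Rop_bd (S := S) (ν := ν) hΨ n x []).1
  have hR0' := (Rop_bd (S := S) (ν := ν) hΨ (n+j) x []).1
  have hpow : Real.exp c ^ j ≤ Real.exp c ^ M := pow_le_pow_right₀ hE1 hj
  have h5 : p * (W / 2) ≤ Real.exp c ^ M * (Real.exp c ^ M * Rop S ν Ψ n x []) := by
    refine h1.trans (h2.trans ?_)
    simp only [List.length_nil, zero_add]
    refine mul_le_mul hpow (h3.trans ?_) hR0' (by positivity)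
    gcongr
  have h6 : W ≤ q * Rop S ν Ψ n x [] := by
    rw [hq]
    have : W = (p * (W / 2)) * (2 / p) := by field_simp
    rw [this]
    refine (mul_le_mul_of_nonneg_right h5 (by positivity)).trans (le_of_eq (by ring))
  exact (hWm y hy).trans (h6.trans (by gcongr; exact le_max_right _ _))

lemma Rop_super (hS : Measurable S) (hΨ : GoodPsi Ψ L c c') {A : Set H}
    (hinv : ∀ x ∈ A, ∀ᵐ h ∂ν, S x + h ∈ A) (k : ℕ) (β : ℝ)
    (hβ : ∀ z ∈ A, β ≤ Rop S ν Ψ k z []) (n : ℕ) : ∀ x ∈ A, ∀ l,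
    β * Rop S ν Ψ n x l ≤ Real.exp c' * Rop S ν Ψ (k + n + 1) x l := by
  induction n with
  | zero =>
    intro x hx l
    have : ∫ h, β * Ψ (x :: l) ∂ν ≤ ∫ h, Real.exp c' * Rop S ν Ψ k (S x + h) (x :: l) ∂ν := by
      refine integral_mono_ae (integrable_const _) ((Rop_int hS hΨ _ _ _).const_mul _) ?_
      filter_upwards [hinv x hx] with h hh
      have h1 := Rop_cat (ν := ν) hS hΨ k [] (x :: l) (S x + h)
      rw [List.nil_append] at h1
      exact (mul_le_mul_of_nonneg_right (hβ _ hh) (hΨ.pos _).le).trans h1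
    simpa [Rop, integral_const_mul] using this
  | succ n ih =>
    intro x hx l
    rw [Rop]
    rw [show k + (n + 1) + 1 = (k + n + 1) + 1 by ring]
    conv_rhs => rw [Rop]
    rw [← integral_const_mul, ← integral_const_mul]
    refine integral_mono_ae ((Rop_int hS hΨ _ _ _).const_mul _)
      ((Rop_int hS hΨ _ _ _).const_mul _) ?_
    filter_upwards [hinv x hx] with h hh
    exact ih _ hh _

lemma Rop_limit (hS : Measurable S) (hΨ : GoodPsi Ψ L c c') {A : Set H} (hA : IsCompact A)
    (hne : A.Nonempty) (hinv : ∀ x ∈ A, ∀ᵐ h ∂ν, S x + h ∈ A)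
    (hO : OneStep S ν A) (hDo : Doeblin S ν A) (lam : Measure H) [IsProbabilityMeasure lam]
    (hlam : ∀ᵐ x ∂lam, x ∈ A) :
    ∃ Λ : ℝ, Tendsto (fun n : ℕ => Real.log (∫ x, Rop S ν Ψ (n - 1) x [] ∂lam) / n) atTop (𝓝 Λ) := by
  obtain ⟨c₀, hc₀, hcomp⟩ := Rop_compare hS hΨ hA hO hDo
  obtain ⟨x₀, hx₀⟩ := hne
  have hc₀p : 0 < c₀ := by linarith
  have hlc₀ : 0 ≤ Real.log c₀ := Real.log_nonneg hc₀
  set r : ℕ → ℝ := fun n => Rop S ν Ψ n x₀ [] with hr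
  have hrp : ∀ n, 0 < r n := fun n => Rop_pos hS hΨ n x₀ []
  have hr1 : ∀ n, Real.log (r n) ≤ 0 := fun n =>
    Real.log_nonpos (hrp n).le (Rop_bd hΨ n x₀ []).2
  set u : ℕ → ℝ := fun n => if n = 0 then 0 else - Real.log (r (n - 1)) + (c' + Real.log c₀) with hu
  have hc'0 := hΨ.hc'
  have hu0 : ∀ n, 0 ≤ u n := by
    intro n
    simp only [hu]
    split_ifs
    · exact le_rfl
    · linarith [hr1 (n - 1)]
  have hsub : Subadditive u := by
    intro m n
    rcases m with _ | m
    · simp [hu]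
    rcases n with _ | n
    · simp [hu]
    have h1 := Rop_super (ν := ν) hS hΨ hinv m (c₀⁻¹ * r m) (fun z hz => by
      rw [inv_mul_le_iff₀ hc₀p]; exact hcomp m z hz x₀ hx₀) n x₀ hx₀ []
    have h2 : Real.log (c₀⁻¹ * r m * r n) ≤ Real.log (Real.exp c' * r (m + n + 1)) :=
      Real.log_le_log (mul_pos (mul_pos (inv_pos.2 hc₀p) (hrp m)) (hrp n)) h1
    rw [Real.log_mul (mul_pos (inv_pos.2 hc₀p) (hrp m)).ne' (hrp n).ne',
      Real.log_mul (inv_pos.2 hc₀p).ne' (hrp m).ne', Real.log_inv,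
      Real.log_mul (Real.exp_pos _).ne' (hrp _).ne', Real.log_exp] at h2
    simp only [hu, Nat.add_eq_zero_iff, one_ne_zero, and_false, if_false, Nat.add_sub_cancel]
    rw [show m + 1 + (n + 1) - 1 = m + n + 1 by omega]
    linarith
  have hlim := hsub.tendsto_lim ⟨0, by rintro _ ⟨n, rfl⟩; exact div_nonneg (hu0 n) n.cast_nonneg⟩
  refine ⟨-hsub.lim, ?_⟩
  have hRint : ∀ n, Integrable (fun x => Rop S ν Ψ n x []) lam := by
    intro n
    refine Integrable.of_bound (Rop_meas'' hS hΨ n []).aestronglyMeasurable 1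
      (Eventually.of_forall fun h => ?_)
    rw [Real.norm_eq_abs, abs_of_nonneg (Rop_bd hΨ n _ _).1]
    exact (Rop_bd hΨ n _ _).2
  have hE1 : ∀ n, c₀⁻¹ * r n ≤ ∫ x, Rop S ν Ψ n x [] ∂lam := by
    intro n
    have : ∫ x, c₀⁻¹ * r n ∂lam ≤ ∫ x, Rop S ν Ψ n x [] ∂lam := by
      refine integral_mono_ae (integrable_const _) (hRint n) ?_
      filter_upwards [hlam] with x hx
      rw [inv_mul_le_iff₀ hc₀p]; exact hcomp n x hx x₀ hx₀
    simpa using this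
  have hE2 : ∀ n, ∫ x, Rop S ν Ψ n x [] ∂lam ≤ c₀ * r n := by
    intro n
    have : ∫ x, Rop S ν Ψ n x [] ∂lam ≤ ∫ x, c₀ * r n ∂lam := by
      refine integral_mono_ae (hRint n) (integrable_const _) ?_
      filter_upwards [hlam] with x hx
      exact hcomp n x₀ hx₀ x hx
    simpa using this
  have hbd : ∀ n, |Real.log (∫ x, Rop S ν Ψ n x [] ∂lam) - Real.log (r n)| ≤ Real.log c₀ := by
    intro n
    have h0 : 0 < c₀⁻¹ * r n := mul_pos (inv_pos.2 hc₀p) (hrp n)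
    have h1 := Real.log_le_log h0 (hE1 n)
    have h2 := Real.log_le_log (h0.trans_le (hE1 n)) (hE2 n)
    rw [Real.log_mul (inv_pos.2 hc₀p).ne' (hrp n).ne', Real.log_inv] at h1
    rw [Real.log_mul hc₀p.ne' (hrp n).ne'] at h2
    rw [abs_le]; constructor <;> linarith
  have hz : Tendsto (fun n : ℕ => Real.log (∫ x, Rop S ν Ψ (n - 1) x [] ∂lam) / n + u n / n) atTop (𝓝 0) := by
    have hK : Tendsto (fun n : ℕ => (c' + 2 * Real.log c₀) / (n : ℝ)) atTop (𝓝 0) :=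
      tendsto_const_div_atTop_nhds_zero_nat _
    refine squeeze_zero_norm' ?_ hK
    filter_upwards [eventually_gt_atTop 0] with n hn
    rw [← add_div, norm_div, Real.norm_natCast, Real.norm_eq_abs]
    gcongr
    have := hbd (n - 1)
    simp only [hu, hn.ne', if_false]
    rw [abs_le] at this ⊢
    constructor <;> linarith [this.1, this.2]
  have := hz.sub hlim
  simpa using this

end Rlim

set_option linter.unusedSectionVars false
section Aset

lemma S_zero {S : H → H} (hA : CondA S) : S 0 = 0 := by
  have hcont : Continuous S := hA.1.continuous
  have h1 : Tendsto (fun n => S^[n] (0 : H)) atTop (𝓝 0) := by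
    rw [Metric.tendsto_atTop]
    intro ε hε
    obtain ⟨C, _, a, ha, ha1, n₀, _, _, h⟩ := hA.2 (ε / 2 + 1) (ε / 2) (by positivity) (by linarith)
    refine ⟨n₀, fun n hn => ?_⟩
    have := h 0 (by simp; positivity) n hn
    rw [norm_zero, mul_zero, max_eq_right (by positivity)] at this
    rw [dist_zero_right]; linarith
  have h2 : Tendsto (fun n => S (S^[n] (0 : H))) atTop (𝓝 (S 0)) := (hcont.tendsto 0).comp h1
  have h3 : Tendsto (fun n => S^[n+1] (0 : H)) atTop (𝓝 0) := h1.comp (tendsto_add_atTop_nat 1)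
  simp only [Function.iterate_succ_apply'] at h3
  exact tendsto_nhds_unique h2 h3

lemma S_attract {S : H → H} (hA : CondA S) (x : H) (r : ℝ) (hr : 0 < r) :
    ∃ n, ‖S^[n] x‖ ≤ r := by
  obtain ⟨C, _, a, ha, ha1, n₀, _, _, h⟩ := hA.2 (‖x‖ + r + 1) r hr (by linarith [norm_nonneg x])
  have h1 : ∀ j : ℕ, ‖S^[j * n₀] x‖ ≤ max (a ^ j * ‖x‖) r := by
    intro j
    induction j with
    | zero => simp
    | succ j ih =>
      have h2 : ‖S^[j * n₀] x‖ ≤ ‖x‖ + r + 1 := by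
        refine ih.trans (max_le ?_ (by linarith [norm_nonneg x]))
        have : a ^ j * ‖x‖ ≤ 1 * ‖x‖ := by gcongr; exact pow_le_one₀ ha.le ha1.le
        linarith
      have h3 := h (S^[j * n₀] x) (by simpa using h2) n₀ le_rfl
      rw [← Function.iterate_add_apply, show n₀ + j * n₀ = (j + 1) * n₀ by ring] at h3
      refine h3.trans (max_le ?_ (le_max_right _ _))
      rcases le_max_iff.1 ih with h4 | h4
      · refine le_max_of_le_left ?_
        rw [pow_succ', mul_assoc]; gcongr
      · refine le_max_of_le_right ?_
        nlinarith [norm_nonneg (S^[j * n₀] x)]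
  have h2 : Tendsto (fun j : ℕ => a ^ j * ‖x‖) atTop (𝓝 (0 * ‖x‖)) :=
    (tendsto_pow_atTop_nhds_zero_of_lt_one ha.le ha1).mul_const _
  rw [zero_mul] at h2
  obtain ⟨j, hj⟩ := (h2.eventually (ge_mem_nhds hr)).exists
  exact ⟨j * n₀, (h1 j).trans (max_le hj le_rfl)⟩

lemma attain_compact {S : H → H} (hS : Continuous S) {K : Set H} (hK : IsCompact K) (k : ℕ) :
    IsCompact (attain S K {0} k) := by
  induction k with
  | zero => exact isCompact_singleton
  | succ k ih => exact (ih.image hS).add hK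

lemma attain_bdd {S : H → H} (hS : Continuous S) {K : Set H} (hK : IsCompact K)
    (hB : CondB S K) : ∃ R : ℝ, 0 < R ∧ ∀ k, attain S K {0} k ⊆ Metric.closedBall 0 R := by
  obtain ⟨ρ, hρ, k₀, _, h⟩ := hB
  have h1 : Bornology.IsBounded (⋃ k ∈ Finset.range (k₀ 0), attain S K {0} k) := by
    rw [Bornology.isBounded_biUnion_finset]
    exact fun k _ => (attain_compact hS hK k).isBounded
  obtain ⟨R, hR⟩ := h1.subset_closedBall 0
  refine ⟨max ρ R, lt_max_of_lt_left hρ, fun k => ?_⟩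
  by_cases hk : k₀ 0 ≤ k
  · have := h 0 le_rfl k hk
    rw [Metric.closedBall_zero] at this
    exact this.trans (Metric.closedBall_subset_closedBall (le_max_left _ _))
  · refine Set.Subset.trans ?_ (Metric.closedBall_subset_closedBall (le_max_right ρ R))
    refine Set.Subset.trans ?_ hR
    exact Set.subset_biUnion_of_mem (u := fun k => attain S K {0} k)
      (by simpa using hk)

lemma repr_abs_le (e : HilbertBasis ℕ ℝ H) (u : H) (j : ℕ) : |e.repr u j| ≤ ‖u‖ := by
  rw [HilbertBasis.repr_apply_apply]
  refine (abs_real_inner_le_norm _ _).trans ?_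
  rw [e.orthonormal.1 j, one_mul]

lemma S_ball_tb {S : H → H} {e : HilbertBasis ℕ ℝ H} (hA : CondA S) (hC : CondC S e)
    (R : ℝ) (hR : 0 < R) : TotallyBounded (S '' Metric.closedBall 0 R) := by
  obtain ⟨γ, hγ, _, hγ0, h⟩ := hC R hR
  obtain ⟨C, hCp, _, _, _, _, _, hL, _⟩ := hA.2 (R + 1) R hR (by linarith)
  have h0 := S_zero hA
  rw [Metric.totallyBounded_iff]
  intro ε hε
  have h1 : ∀ᶠ N in atTop, γ N < ε / 2 / R :=
    hγ0.eventually (gt_mem_nhds (by positivity))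
  obtain ⟨N, hN⟩ := h1.exists
  set Q : Set H := (fun c : ℕ → ℝ => ∑ j ∈ Finset.range N, c j • (e j : H)) ''
    (Set.pi Set.univ fun _ => Set.Icc (-(C * R)) (C * R)) with hQ
  have hQc : IsCompact Q := by
    refine (isCompact_univ_pi fun _ => isCompact_Icc).image ?_
    fun_prop
  obtain ⟨t, ht, htc⟩ := Metric.totallyBounded_iff.1 hQc.totallyBounded (ε / 2) (by positivity)
  refine ⟨t, ht, ?_⟩
  rintro _ ⟨u, hu, rfl⟩
  have hu' : ‖u‖ ≤ R := by simpa using hu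
  have hSu : ‖S u‖ ≤ C * R := by
    have := hL u (by simp; linarith) 0 (by simp; linarith)
    rw [h0, sub_zero, sub_zero] at this
    exact this.trans (by gcongr)
  have hp : projB e N (S u) ∈ Q := by
    refine ⟨fun j => e.repr (S u) j, ?_, rfl⟩
    intro j _
    exact abs_le.1 ((repr_abs_le e (S u) j).trans hSu)
  have hd : ‖S u - projB e N (S u)‖ < ε / 2 := by
    have := h N u hu 0 (by simp; linarith)
    rw [h0, sub_zero, sub_zero] at this
    refine this.trans_lt ?_
    calc γ N * ‖u‖ ≤ γ N * R := by gcongr; exact (hγ N).le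
      _ < ε / 2 / R * R := by gcongr
      _ = ε / 2 := by field_simp
  obtain ⟨y, hy, hyd⟩ := Set.mem_iUnion₂.1 (htc hp)
  refine Set.mem_iUnion₂.2 ⟨y, hy, ?_⟩
  rw [Metric.mem_ball] at *
  rw [← dist_eq_norm] at hd
  linarith [dist_triangle (S u) (projB e N (S u)) y]

lemma A_compact {S : H → H} {e : HilbertBasis ℕ ℝ H} {K : Set H} (hK : IsCompact K)
    (hA : CondA S) (hB : CondB S K) (hC : CondC S e) :
    IsCompact (attainDom S K {0}) := by
  have hS : Continuous S := hA.1.continuous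
  obtain ⟨R, hR, hk⟩ := attain_bdd hS hK hB
  have h1 : IsCompact (closure (S '' Metric.closedBall 0 R)) :=
    (S_ball_tb hA hC R hR).closure.isCompact_of_isClosed isClosed_closure
  have h2 : IsCompact ({0} ∪ (closure (S '' Metric.closedBall 0 R) + K)) :=
    isCompact_singleton.union (h1.add hK)
  refine h2.of_isClosed_subset isClosed_closure (closure_minimal ?_ h2.isClosed)
  refine Set.iUnion_subset fun k => ?_
  rcases k with _ | k
  · exact Set.subset_union_left
  · refine Set.Subset.trans ?_ Set.subset_union_right
    exact Set.add_subset_add_right ((Set.image_mono (hk k)).trans subset_closure)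

lemma A_inv {S : H → H} {K : Set H} (hS : Continuous S) {x h : H}
    (hx : x ∈ attainDom S K {0}) (hh : h ∈ K) : S x + h ∈ attainDom S K {0} := by
  refine map_mem_closure (f := fun x => S x + h) (by fun_prop) hx ?_
  intro y hy
  obtain ⟨k, hk⟩ := Set.mem_iUnion.1 hy
  exact Set.mem_iUnion.2 ⟨k + 1, Set.add_mem_add ⟨y, hk, rfl⟩ hh⟩

lemma zero_mem_A {S : H → H} {K : Set H} : (0 : H) ∈ attainDom S K {0} :=
  subset_closure (Set.mem_iUnion.2 ⟨0, rfl⟩)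

variable [MeasurableSpace H] [BorelSpace H] [SecondCountableTopology H]
  {S : H → H} {ν : Measure H} [IsProbabilityMeasure ν]

/-- Local reachability with positive probability. -/
def Reach (S : H → H) (ν : Measure H) (A : Set H) (x y : H) : Prop :=
  ∀ ε : ℝ, 0 < ε → ∃ (k : ℕ) (δ p : ℝ), 0 < δ ∧ 0 < p ∧ ∀ x' ∈ A, ‖x' - x‖ < δ →
    ∀ (f : H → ℝ) (β : ℝ),
    Measurable f → (∀ z, 0 ≤ f z) → (∀ z, f z ≤ 1) → 0 ≤ β →
    (∀ z ∈ A, ‖z - y‖ < ε → β ≤ f z) → p * β ≤ ((Top1 S ν)^[k] f) x'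

lemma Top1_meas (hS : Measurable S) {f : H → ℝ} (hf : Measurable f) : Measurable (Top1 S ν f) := by
  have h1 : Measurable (fun p : H × H => f (S p.1 + p.2)) := hf.comp (by fun_prop)
  exact (h1.stronglyMeasurable.integral_prod_right' (ν := ν)).measurable

lemma Top1_le {f : H → ℝ} (hf0 : ∀ z, 0 ≤ f z) (hf : ∀ z, f z ≤ 1) (x : H) : Top1 S ν f x ≤ 1 := by
  have := integral_mono_of_nonneg (μ := ν) (Eventually.of_forall fun h => hf0 (S x + h))
      (integrable_const (1 : ℝ)) (Eventually.of_forall fun h => hf (S x + h))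
  simpa [Top1] using this

lemma Top1_iter (hS : Measurable S) {f : H → ℝ} (hfm : Measurable f) (hf0 : ∀ z, 0 ≤ f z)
    (hf : ∀ z, f z ≤ 1) (k : ℕ) : Measurable ((Top1 S ν)^[k] f) ∧ (∀ z, 0 ≤ ((Top1 S ν)^[k] f) z) ∧
      ∀ z, ((Top1 S ν)^[k] f) z ≤ 1 := by
  induction k with
  | zero => exact ⟨hfm, hf0, hf⟩
  | succ k ih =>
    rw [Function.iterate_succ_apply']
    exact ⟨Top1_meas hS ih.1, fun z => integral_nonneg fun h => ih.2.1 _,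
      fun z => Top1_le ih.2.1 ih.2.2 z⟩

lemma Reach.trans (hS : Measurable S) {A : Set H} {x y z : H} (h1 : Reach S ν A x y)
    (h2 : Reach S ν A y z) : Reach S ν A x z := by
  intro ε hε
  obtain ⟨k₂, δ₂, p₂, hδ₂, hp₂, H2⟩ := h2 ε hε
  obtain ⟨k₁, δ₁, p₁, hδ₁, hp₁, H1⟩ := h1 δ₂ hδ₂
  refine ⟨k₁ + k₂, δ₁, p₁ * p₂, hδ₁, by positivity, ?_⟩
  intro x' hx' hd f β hf hf0 hf1 hβ hz
  rw [Function.iterate_add_apply, mul_assoc]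
  obtain ⟨a, b, c⟩ := Top1_iter (ν := ν) hS hf hf0 hf1 k₂
  exact H1 x' hx' hd _ _ a b c (by positivity) fun z hz' hzd => H2 z hz' hzd f β hf hf0 hf1 hβ hz

lemma Reach.limit {A : Set H} {x y : H} (h : ∀ ε : ℝ, 0 < ε → ∃ y', ‖y' - y‖ < ε ∧ Reach S ν A x y') :
    Reach S ν A x y := by
  intro ε hε
  obtain ⟨y', hy', hr⟩ := h (ε / 2) (by positivity)
  obtain ⟨k, δ, p, hδ, hp, H1⟩ := hr (ε / 2) (by positivity)
  refine ⟨k, δ, p, hδ, hp, fun x' hx' hd f β hf hf0 hf1 hβ hz => H1 x' hx' hd f β hf hf0 hf1 hβ ?_⟩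
  intro z hzA hzy
  refine hz z hzA ?_
  linarith [norm_sub_le_norm_sub_add_norm_sub z y' y]

lemma Reach.step (hS : Continuous S) {A K : Set H} (hinv : ∀ x ∈ A, ∀ᵐ h ∂ν, S x + h ∈ A)
    (hK : ∀ h ∈ K, ∀ δ : ℝ, 0 < δ → 0 < ν (Metric.ball h δ)) (y h : H) (hh : h ∈ K) :
    Reach S ν A y (S y + h) := by
  intro ε hε
  obtain ⟨δ, hδ, hd⟩ := Metric.continuous_iff.1 hS y (ε / 2) (by positivity)
  set B := Metric.ball h (ε / 2) with hB
  refine ⟨1, δ, ν.real B, hδ, ?_, ?_⟩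
  · exact ENNReal.toReal_pos (hK h hh _ (by positivity)).ne' (measure_ne_top _ _)
  intro x' hx' hxd f β hf hf0 hf1 hβ hz
  have h1 : ∫ h', B.indicator (fun _ => β) h' ∂ν = ν.real B * β := by
    rw [integral_indicator_const _ Metric.isOpen_ball.measurableSet, smul_eq_mul]
  rw [← h1]
  refine integral_mono_ae ?_ ?_ ?_
  · exact (integrable_const β).indicator Metric.isOpen_ball.measurableSet
  · refine Integrable.of_bound (hf.comp (by fun_prop)).aestronglyMeasurable 1
      (Eventually.of_forall fun h => ?_)
    rw [Real.norm_eq_abs, abs_of_nonneg (hf0 _)]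
    exact hf1 _
  · filter_upwards [hinv x' hx'] with h' hh'
    by_cases hb : h' ∈ B
    · rw [Set.indicator_of_mem hb]
      refine hz _ hh' ?_
      have h2 := hd x' (by rw [dist_eq_norm]; exact hxd)
      rw [hB, Metric.mem_ball] at hb
      rw [← dist_eq_norm]
      linarith [dist_add_add_le (S x') h' (S y) h]
    · rw [Set.indicator_of_notMem hb]; exact hf0 _

lemma Reach.refl {A : Set H} (x : H) : Reach S ν A x x := by
  intro ε hε
  refine ⟨0, ε, 1, hε, one_pos, fun x' hx' hd f β _ _ _ _ hz => ?_⟩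
  simpa using hz x' hx' hd

lemma Reach.attain (hS : Continuous S) {A K : Set H} (hinv : ∀ x ∈ A, ∀ᵐ h ∂ν, S x + h ∈ A)
    (hK : ∀ h ∈ K, ∀ δ : ℝ, 0 < δ → 0 < ν (Metric.ball h δ)) (k : ℕ) :
    ∀ y ∈ attain S K {0} k, Reach S ν A 0 y := by
  induction k with
  | zero => intro y hy; rw [show y = 0 from hy]; exact Reach.refl 0
  | succ k ih =>
    rintro _ ⟨_, ⟨y, hy, rfl⟩, h, hh, rfl⟩
    exact (ih y hy).trans hS.measurable (Reach.step hS hinv hK y h hh)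

lemma Reach.iter (hS : Continuous S) {A K : Set H} (hinv : ∀ x ∈ A, ∀ᵐ h ∂ν, S x + h ∈ A)
    (hK : ∀ h ∈ K, ∀ δ : ℝ, 0 < δ → 0 < ν (Metric.ball h δ)) (h0 : (0 : H) ∈ K) (x : H) (k : ℕ) :
    Reach S ν A x (S^[k] x) := by
  induction k with
  | zero => exact Reach.refl x
  | succ k ih =>
    rw [Function.iterate_succ_apply']
    have := Reach.step (ν := ν) hS hinv hK (S^[k] x) 0 h0
    rw [add_zero] at this
    exact ih.trans hS.measurable this

lemma doeblin_A {K : Set H} (hA : CondA S) (hAc : IsCompact (attainDom S K {0}))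
    (hinv : ∀ x ∈ attainDom S K {0}, ∀ᵐ h ∂ν, S x + h ∈ attainDom S K {0})
    (hK : ∀ h ∈ K, ∀ δ : ℝ, 0 < δ → 0 < ν (Metric.ball h δ)) (h0 : (0 : H) ∈ K) :
    Doeblin S ν (attainDom S K {0}) := by
  have hS : Continuous S := hA.1.continuous
  set A := attainDom S K {0} with hAd
  have hreach : ∀ x, ∀ y ∈ A, Reach S ν A x y := by
    intro x y hy
    have h1 : Reach S ν A x 0 := by
      refine Reach.limit fun ε hε => ?_
      obtain ⟨n, hn⟩ := S_attract hA x (ε / 2) (by positivity)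
      exact ⟨S^[n] x, by rw [sub_zero]; linarith, Reach.iter hS hinv hK h0 x n⟩
    refine h1.trans hS.measurable (Reach.limit fun ε hε => ?_)
    obtain ⟨y', hy', hd⟩ := Metric.mem_closure_iff.1 hy ε hε
    obtain ⟨k, hk⟩ := Set.mem_iUnion.1 hy'
    exact ⟨y', by rwa [← dist_eq_norm, dist_comm], Reach.attain hS hinv hK k y' hk⟩
  intro ε hε
  have key : ∃ p : ℝ, 0 < p ∧ ∃ M : ℕ, ∀ q ∈ A ×ˢ A, q ∈ A ×ˢ A → ∃ j ≤ M, ∀ (f : H → ℝ) (β : ℝ),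
    Measurable f → (∀ z, 0 ≤ f z) → (∀ z, f z ≤ 1) → 0 ≤ β →
    (∀ z ∈ A, ‖z - q.2‖ < ε → β ≤ f z) → p * β ≤ ((Top1 S ν)^[j] f) q.1 := by
    refine (hAc.prod hAc).induction_on
      (p := fun s => ∃ p : ℝ, 0 < p ∧ ∃ M : ℕ, ∀ q ∈ s, q ∈ A ×ˢ A → ∃ j ≤ M,
        ∀ (f : H → ℝ) (β : ℝ),
        Measurable f → (∀ z, 0 ≤ f z) → (∀ z, f z ≤ 1) → 0 ≤ β →
        (∀ z ∈ A, ‖z - q.2‖ < ε → β ≤ f z) → p * β ≤ ((Top1 S ν)^[j] f) q.1) ?_ ?_ ?_ ?_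
    · exact ⟨1, one_pos, 0, by simp⟩
    · rintro s t hst ⟨p, hp, M, h⟩
      exact ⟨p, hp, M, fun q hq => h q (hst hq)⟩
    · rintro s t ⟨p, hp, M, h⟩ ⟨p', hp', M', h'⟩
      refine ⟨min p p', lt_min hp hp', max M M', ?_⟩
      rintro q (hq | hq) hqA
      · obtain ⟨j, hj, hf⟩ := h q hq hqA
        refine ⟨j, hj.trans (le_max_left _ _), fun f β a b c d e => le_trans ?_ (hf f β a b c d e)⟩
        gcongr; exact min_le_left _ _
      · obtain ⟨j, hj, hf⟩ := h' q hq hqA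
        refine ⟨j, hj.trans (le_max_right _ _), fun f β a b c d e => le_trans ?_ (hf f β a b c d e)⟩
        gcongr; exact min_le_right _ _
    · rintro ⟨x, y⟩ ⟨hx, hy⟩
      obtain ⟨k, δ, p, hδ, hp, hf⟩ := hreach x y hy (ε / 2) (by positivity)
      refine ⟨Metric.ball x δ ×ˢ Metric.ball y (ε / 2), mem_nhdsWithin_of_mem_nhds
        (prod_mem_nhds (Metric.ball_mem_nhds _ hδ) (Metric.ball_mem_nhds _ (by positivity))),
        p, hp, k, ?_⟩
      rintro ⟨x', y'⟩ ⟨hx', hy'⟩ ⟨hxA, hyA⟩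
      refine ⟨k, le_rfl, fun f β a b c d e => ?_⟩
      refine hf x' hxA (by rw [← dist_eq_norm]; exact hx') f β a b c d ?_
      intro z hz hzy
      refine e z hz ?_
      have h1 : dist y' y < ε / 2 := hy'
      rw [← dist_eq_norm] at hzy ⊢
      simp only
      linarith [dist_triangle_right z y' y]
  obtain ⟨p, hp, M, h⟩ := key
  exact ⟨p, hp, M, fun x hx y hy => h (x, y) ⟨hx, hy⟩ ⟨hx, hy⟩⟩

end Aset

set_option linter.unusedSectionVars false
section Noise
variable [MeasurableSpace H] [BorelSpace H] [SecondCountableTopology H]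
  {Ω : Type} [mΩ : MeasurableSpace Ω] {P : Measure Ω} [IsProbabilityMeasure P]
  {e : HilbertBasis ℕ ℝ H} {η : ℕ → Ω → H} {b : ℕ → ℝ} {ξ : ℕ → ℕ → Ω → ℝ} {p : ℕ → ℝ → ℝ}

/-- sigma-algebra generated by a subfamily of the noise coordinates -/
def sigT (ξ : ℕ → ℕ → Ω → ℝ) (T : Set (ℕ × ℕ)) : MeasurableSpace Ω :=
  ⨆ jk ∈ T, MeasurableSpace.comap (ξ jk.1 jk.2) inferInstance

lemma sigT_le (hD : CondD P e η b ξ p) (T : Set (ℕ × ℕ)) : sigT ξ T ≤ mΩ :=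
  iSup₂_le fun jk _ => (hD.2.2.2.1 jk.1 jk.2).comap_le

lemma sigT_mono {T T' : Set (ℕ × ℕ)} (h : T ⊆ T') : sigT ξ T ≤ sigT ξ T' :=
  biSup_mono h

lemma sigT_indep (hD : CondD P e η b ξ p) {T T' : Set (ℕ × ℕ)} (h : Disjoint T T') :
    Indep (sigT ξ T) (sigT ξ T') P :=
  by
  have h1 := hD.2.2.2.2.1.iIndep
  have h2 : ∀ jk : ℕ × ℕ, MeasurableSpace.comap (ξ jk.1 jk.2) inferInstance ≤ mΩ :=
    fun jk => (hD.2.2.2.1 jk.1 jk.2).comap_le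
  exact indep_iSup_of_disjoint h2 h1 h

lemma xi_meas_sigT {T : Set (ℕ × ℕ)} {j k : ℕ} (h : (j, k) ∈ T) : Measurable[sigT ξ T] (ξ j k) := by
  rw [measurable_iff_comap_le]
  exact le_iSup₂ (f := fun (jk : ℕ × ℕ) (_ : jk ∈ T) =>
    MeasurableSpace.comap (ξ jk.1 jk.2) inferInstance) (j, k) h

lemma eta_meas_sigT (hD : CondD P e η b ξ p) (k : ℕ) (T : Set (ℕ × ℕ)) (hT : ∀ j, (j, k) ∈ T) :
    Measurable[sigT ξ T] (η k) := by
  refine @measurable_of_tendsto_metrizable Ω H (sigT ξ T) _ _ _ _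
    (fun n ω => ∑ j ∈ Finset.range n, (b j * ξ j k ω) • (e j : H)) (η k) ?_ ?_
  · intro n
    refine Finset.measurable_fun_sum _ fun j _ => ?_
    exact ((xi_meas_sigT (hT j)).const_mul (b j)).smul_const _
  · rw [tendsto_pi_nhds]
    intro ω
    exact (hD.2.2.1 k ω).tendsto_sum_nat

lemma rest_meas_sigT (hD : CondD P e η b ξ p) (k i : ℕ) (T : Set (ℕ × ℕ))
    (hT : ∀ j, j ≠ i → (j, k) ∈ T) :
    Measurable[sigT ξ T] (fun ω => η k ω - (b i * ξ i k ω) • (e i : H)) := by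
  refine @measurable_of_tendsto_metrizable Ω H (sigT ξ T) _ _ _ _
    (fun n ω => ∑ j ∈ Finset.range n, (if j = i then 0 else (b j * ξ j k ω) • (e j : H))) _ ?_ ?_
  · intro n
    refine Finset.measurable_fun_sum _ fun j _ => ?_
    by_cases hj : j = i
    · simp [hj]
    · simp only [hj, if_false]
      exact ((xi_meas_sigT (hT j hj)).const_mul (b j)).smul_const _
  · rw [tendsto_pi_nhds]
    intro ω
    have h1 := (hD.2.2.1 k ω).sub (hasSum_ite_eq i ((b i * ξ i k ω) • (e i : H)))
    have h2 := h1.tendsto_sum_nat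
    refine h2.congr fun n => Finset.sum_congr rfl fun j _ => ?_
    by_cases hj : j = i
    · subst hj; simp
    · simp [hj]

lemma eta_law (hD : CondD P e η b ξ p) (hη : ∀ k, Measurable (η k)) (k : ℕ) :
    Measure.map (η k) P = Measure.map (η 1) P := by
  have := Measure.isProbabilityMeasure_map (μ := P) (hη k).aemeasurable
  have := Measure.isProbabilityMeasure_map (μ := P) (hη 1).aemeasurable
  refine ext_of_forall_integral_eq_of_IsFiniteMeasure fun f => ?_
  have hid : IdentDistrib (fun ω j => ξ j k ω) (fun ω j => ξ j 1 ω) P P := by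
    refine IdentDistrib.pi (X := fun j => ξ j k) (Y := fun j => ξ j 1) ?_ ?_ ?_
    · intro j
      refine ⟨(hD.2.2.2.1 j k).aemeasurable, (hD.2.2.2.1 j 1).aemeasurable, ?_⟩
      rw [hD.2.2.2.2.2.1, hD.2.2.2.2.2.1]
    · exact hD.2.2.2.2.1.precomp (g := fun j => (j, k)) (fun a c h => by simpa using h)
    · exact hD.2.2.2.2.1.precomp (g := fun j => (j, 1)) (fun a c h => by simpa using h)
  have hlim : ∀ k, Tendsto (fun n : ℕ => ∫ ω, f (∑ j ∈ Finset.range n, (b j * ξ j k ω) • (e j : H)) ∂P)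
      atTop (𝓝 (∫ x, f x ∂(Measure.map (η k) P))) := by
    intro k
    rw [integral_map (hη k).aemeasurable f.continuous.aestronglyMeasurable]
    refine tendsto_integral_of_dominated_convergence (fun _ => ‖f‖) ?_ (integrable_const _) ?_ ?_
    · intro n
      refine (f.continuous.measurable.comp ?_).aestronglyMeasurable
      exact Finset.measurable_fun_sum _ fun j _ => ((hD.2.2.2.1 j k).const_mul (b j)).smul_const _
    · exact fun n => ae_of_all _ fun ω => f.norm_coe_le_norm _
    · exact ae_of_all _ fun ω => (f.continuous.tendsto _).comp (hD.2.2.1 k ω).tendsto_sum_nat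
  refine tendsto_nhds_unique (hlim k) ((hlim 1).congr fun n => ?_)
  have hg : Measurable (fun s : ℕ → ℝ => f (∑ j ∈ Finset.range n, (b j * s j) • (e j : H))) := by
    refine f.continuous.measurable.comp ?_
    exact Finset.measurable_fun_sum _ fun j _ => (((measurable_pi_apply (X := fun _ : ℕ => ℝ) j)).const_mul (b j)).smul_const _
  exact ((hid.comp hg).integral_eq).symm

lemma xi_le (hD : CondD P e η b ξ p) (j k : ℕ) : ∀ᵐ ω ∂P, |ξ j k ω| ≤ 1 := by
  have h1 : ∀ᵐ x ∂(Measure.map (ξ j k) P), |x| ≤ 1 := by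
    rw [hD.2.2.2.2.2.1]
    obtain ⟨L, hL⟩ := hD.2.2.2.2.2.2.1 j
    rw [ae_withDensity_iff (by have := hL.continuous.measurable; fun_prop)]
    refine ae_of_all _ fun x hx => ?_
    have : x ∈ Function.support (p j) := by
      intro h; simp [h] at hx
    exact abs_le.2 (hD.2.2.2.2.2.2.2.2 j this)
  exact ae_of_ae_map (hD.2.2.2.1 j k).aemeasurable h1

lemma xi_small (hD : CondD P e η b ξ p) (j k : ℕ) {δ : ℝ} (hδ : 0 < δ) :
    0 < P (ξ j k ⁻¹' Metric.ball 0 δ) := by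
  rw [← Measure.map_apply (hD.2.2.2.1 j k) Metric.isOpen_ball.measurableSet, hD.2.2.2.2.2.1]
  obtain ⟨L, hL⟩ := hD.2.2.2.2.2.2.1 j
  have hc := hL.continuous
  have ho : IsOpen (Metric.ball 0 δ ∩ {x | 0 < p j x}) :=
    Metric.isOpen_ball.inter (isOpen_lt continuous_const hc)
  have hpos : 0 < volume (Metric.ball 0 δ ∩ {x | 0 < p j x}) :=
    ho.measure_pos _ ⟨0, by simpa using ⟨hδ, hD.2.2.2.2.2.2.2.1 j⟩⟩
  rw [pos_iff_ne_zero, Ne, withDensity_apply_eq_zero (by have := hc.measurable; fun_prop)]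
  refine ne_of_gt (hpos.trans_le (measure_mono ?_))
  rintro x ⟨h1, h2⟩
  exact ⟨by simpa using h2, h1⟩

lemma zero_mem_msupp (hD : CondD P e η b ξ p) (hη : ∀ k, Measurable (η k)) :
    (0 : H) ∈ msupp (Measure.map (η 1) P) := by
  intro U hU
  obtain ⟨ε, hε, hU⟩ := Metric.mem_nhds_iff.1 hU
  refine lt_of_lt_of_le ?_ (measure_mono hU)
  rw [Measure.map_apply (hη 1) Metric.isOpen_ball.measurableSet]
  have hbs := hD.2.1
  -- tail
  obtain ⟨N, hN⟩ := ((tendsto_order.1 (tendsto_sum_nat_add (fun j => b j ^ 2))).2 (ε ^ 2 / 4)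
    (by positivity)).exists
  set B : ℝ := ∑ j ∈ Finset.range N, b j
  have hB : 0 ≤ B := Finset.sum_nonneg fun j _ => hD.1 j
  set δ : ℝ := ε / (2 * (B + 1))
  have hδ : 0 < δ := by positivity
  have hpos : 0 < P (⋂ j ∈ Finset.range N, ξ j 1 ⁻¹' Metric.ball 0 δ) := by
    have := (hD.2.2.2.2.1.precomp (g := fun j => (j, 1)) (fun a c h => by simpa using h)).measure_inter_preimage_eq_mul
      (Finset.range N) (sets := fun _ => Metric.ball 0 δ) (fun _ _ => Metric.isOpen_ball.measurableSet)
    rw [this, pos_iff_ne_zero, Finset.prod_ne_zero_iff]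
    exact fun j _ => (xi_small hD j 1 hδ).ne'
  have hae : ∀ᵐ ω ∂P, ∀ j, |ξ j 1 ω| ≤ 1 := ae_all_iff.2 fun j => xi_le hD j 1
  refine hpos.trans_le (measure_mono_ae ?_)
  filter_upwards [hae] with ω hω hmem
  change ω ∈ ⋂ j ∈ Finset.range N, ξ j 1 ⁻¹' Metric.ball 0 δ at hmem
  change η 1 ω ∈ Metric.ball 0 ε
  rw [mem_ball_zero_iff]
  have hs := hD.2.2.1 1 ω
  have hsplit : η 1 ω - ∑ j ∈ Finset.range N, (b j * ξ j 1 ω) • (e j : H)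
      = ∑' j, (b (j + N) * ξ (j + N) 1 ω) • (e (j + N) : H) := by
    rw [← hs.tsum_eq, ← hs.summable.sum_add_tsum_nat_add N]; simp
  have h1 : ‖∑ j ∈ Finset.range N, (b j * ξ j 1 ω) • (e j : H)‖ ≤ B * δ := by
    refine (norm_sum_le _ _).trans ?_
    rw [Finset.sum_mul]
    refine Finset.sum_le_sum fun j hj => ?_
    rw [norm_smul, e.orthonormal.1 j, mul_one, Real.norm_eq_abs, abs_mul, abs_of_nonneg (hD.1 j)]
    refine mul_le_mul_of_nonneg_left ?_ (hD.1 j)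
    have := Set.mem_iInter₂.1 hmem j hj
    have h2 : ξ j 1 ω ∈ Metric.ball 0 δ := this
    rw [mem_ball_zero_iff] at h2
    exact h2.le
  have h2 : ‖∑' j, (b (j + N) * ξ (j + N) 1 ω) • (e (j + N) : H)‖ ≤ ε / 2 := by
    have hsum : Summable fun j => (b (j + N) * ξ (j + N) 1 ω) • (e (j + N) : H) :=
      (summable_nat_add_iff N).2 hs.summable
    have hbd : ∀ n, ‖∑ j ∈ Finset.range n, (b (j + N) * ξ (j + N) 1 ω) • (e (j + N) : H)‖ ≤ ε / 2 := by
      intro n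
      have horth : Orthonormal ℝ (fun j => (e (j + N) : H)) :=
        e.orthonormal.comp (fun j => j + N) (add_left_injective N)
      have hsq : ‖∑ j ∈ Finset.range n, (b (j + N) * ξ (j + N) 1 ω) • (e (j + N) : H)‖ ^ 2
          = ∑ j ∈ Finset.range n, (b (j + N) * ξ (j + N) 1 ω) ^ 2 := by
        rw [← real_inner_self_eq_norm_sq]
        rw [horth.inner_sum (fun j => b (j + N) * ξ (j + N) 1 ω) (fun j => b (j + N) * ξ (j + N) 1 ω)]
        simp [sq]
      have hle : ∑ j ∈ Finset.range n, (b (j + N) * ξ (j + N) 1 ω) ^ 2 ≤ ε ^ 2 / 4 := by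
        refine le_trans ?_ hN.le
        refine le_trans (Finset.sum_le_sum (g := fun j => b (j + N) ^ 2) fun j _ => ?_)
          (((summable_nat_add_iff N).2 hbs).sum_le_tsum _ fun _ _ => sq_nonneg _)
        rw [mul_pow]
        have := hω (j + N)
        have h3 : ξ (j + N) 1 ω ^ 2 ≤ 1 := by
          rw [← sq_abs]; exact pow_le_one₀ (abs_nonneg _) this
        nlinarith [sq_nonneg (b (j + N))]
      rw [← hsq] at hle
      nlinarith [norm_nonneg (∑ j ∈ Finset.range n, (b (j + N) * ξ (j + N) 1 ω) • (e (j + N) : H))]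
    exact le_of_tendsto hsum.hasSum.tendsto_sum_nat.norm (Eventually.of_forall hbd)
  have h3 : B * δ < ε / 2 := by
    simp only [δ]
    rw [mul_div_assoc', div_lt_div_iff₀ (by positivity) (by positivity)]
    nlinarith
  calc ‖η 1 ω‖ ≤ ‖η 1 ω - ∑ j ∈ Finset.range N, (b j * ξ j 1 ω) • (e j : H)‖
        + ‖∑ j ∈ Finset.range N, (b j * ξ j 1 ω) • (e j : H)‖ := by
        simpa using norm_add_le (η 1 ω - ∑ j ∈ Finset.range N, (b j * ξ j 1 ω) • (e j : H))
          (∑ j ∈ Finset.range N, (b j * ξ j 1 ω) • (e j : H))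
    _ < ε := by rw [hsplit]; linarith

lemma msupp_ae (ν : Measure H) : ∀ᵐ h ∂ν, h ∈ msupp ν := by
  have h := Measure.measure_compl_support (μ := ν)
  have : ν.support = msupp ν := by
    ext x; rw [Measure.mem_support_iff_forall]; rfl
  rw [this] at h
  exact h

/-- one-dimensional shift estimate -/
lemma shift_real {q : ℝ → ℝ} {L : ℝ≥0} (hq : LipschitzWith L q)
    (hsup : Function.support q ⊆ Set.Icc (-1) 1)
    {μ : Measure ℝ} (hμ : μ = volume.withDensity fun x => ENNReal.ofReal (q x))
    {g : ℝ → ℝ} {M : ℝ} (hg : Measurable g) (h0 : ∀ z, 0 ≤ g z) (hM : ∀ z, g z ≤ M) (t : ℝ) :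
    ∫ z, g z ∂μ ≤ ∫ z, g (z + t) ∂μ + M * (4 * L * |t|) := by
  have hqm := hq.continuous.measurable
  have hM0 : 0 ≤ M := (h0 0).trans (hM 0)
  set r : ℝ → ℝ := fun z => max (q z) 0 with hr
  have hrc : Continuous r := hq.continuous.max continuous_const
  have hrl : ∀ x y, |r x - r y| ≤ L * |x - y| := by
    intro x y
    have h1 := hq.dist_le_mul x y
    rw [Real.dist_eq, Real.dist_eq] at h1
    exact (abs_max_sub_max_le_abs _ _ _).trans h1
  have hrs : ∀ x, x ∉ Set.Icc (-1 : ℝ) 1 → r x = 0 := by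
    intro x hx
    have : q x = 0 := by by_contra h; exact hx (hsup h)
    simp [hr, this]
  have hint : ∀ g : ℝ → ℝ, ∫ z, g z ∂μ = ∫ z, r z * g z := by
    intro g
    rw [hμ, integral_withDensity_eq_integral_toReal_smul (by fun_prop) (by simp)]
    refine integral_congr_ae (ae_of_all _ fun z => ?_)
    simp [hr, ENNReal.toReal_ofReal', smul_eq_mul]
  have hri : Integrable r := by
    refine hrc.integrable_of_hasCompactSupport ?_
    exact HasCompactSupport.intro isCompact_Icc hrs
  have hrgi : ∀ g : ℝ → ℝ, Measurable g → (∀ z, 0 ≤ g z) → (∀ z, g z ≤ M) → Integrable (fun z => r z * g z) := by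
    intro g hg h0 hM
    refine hri.mul_bdd (c := M) hg.aestronglyMeasurable (ae_of_all _ fun z => ?_)
    rw [Real.norm_eq_abs, abs_of_nonneg (h0 z)]; exact hM z
  rw [hint, hint (fun z => g (z + t))]
  have hshift : ∫ z, r z * g (z + t) = ∫ z, r (z - t) * g z := by
    rw [← integral_add_right_eq_self (fun z => r (z - t) * g z) t]
    simp
  rw [hshift]
  have hi1 := hrgi g hg h0 hM
  have hi2 : Integrable (fun z => r (z - t) * g z) := by
    have := (hrgi (fun z => g (z + t)) (by fun_prop) (fun z => h0 _) (fun z => hM _)).comp_sub_right t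
    simpa using this
  rw [← sub_le_iff_le_add', ← integral_sub hi1 hi2]
  set E : Set ℝ := Set.Icc (-1) 1 ∪ Set.Icc (-1 + t) (1 + t) with hE
  have hEv : volume E ≤ 4 := by
    refine (measure_union_le _ _).trans ?_
    rw [Real.volume_Icc, Real.volume_Icc]
    rw [← ENNReal.ofReal_add (by norm_num) (by ring_nf; norm_num)]
    ring_nf; norm_num
  have hEm : MeasurableSet E := measurableSet_Icc.union measurableSet_Icc
  have hEr : volume.real E ≤ 4 := ENNReal.toReal_le_of_le_ofReal (by norm_num) (by simpa using hEv)
  calc ∫ z, (r z * g z - r (z - t) * g z) ≤ ∫ z, E.indicator (fun _ => M * (L * |t|)) z := by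
        refine integral_mono (hi1.sub hi2) ?_ fun z => ?_
        · exact (integrable_indicator_iff hEm).2
            (integrableOn_const (ne_top_of_le_ne_top (by norm_num) hEv))
        · by_cases hz : z ∈ E
          · simp only [Set.indicator_of_mem hz]
            rw [← sub_mul]
            have h1 := hrl z (z - t)
            rw [show z - (z - t) = t by ring] at h1
            have h2 := (le_abs_self _).trans h1
            have h3 : 0 ≤ L * |t| := by positivity
            calc (r z - r (z - t)) * g z ≤ (L * |t|) * g z := mul_le_mul_of_nonneg_right h2 (h0 z)
              _ ≤ (L * |t|) * M := mul_le_mul_of_nonneg_left (hM z) h3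
              _ = _ := by ring
          · simp only [Set.indicator_of_notMem hz]
            have h1 : r z = 0 := hrs z fun h => hz (Or.inl h)
            have h2 : r (z - t) = 0 := hrs _ fun h => hz (Or.inr
              ⟨by linarith [h.1], by linarith [h.2]⟩)
            simp [h1, h2]
    _ = volume.real E * (M * (L * |t|)) := by
        rw [integral_indicator hEm, setIntegral_const, smul_eq_mul]
    _ ≤ 4 * (M * (L * |t|)) := mul_le_mul_of_nonneg_right hEr (by positivity)
    _ = _ := by ring

lemma shift_coord (hD : CondD P e η b ξ p) (hη : ∀ k, Measurable (η k)) (hb : ∀ j, b j ≠ 0) (j : ℕ) :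
    ∃ c : ℝ, 0 ≤ c ∧ ∀ (φ : H → ℝ) (M : ℝ), Measurable φ → (∀ z, 0 ≤ φ z) → (∀ z, φ z ≤ M) →
      ∀ w : ℝ, ∫ h, φ h ∂(Measure.map (η 1) P)
        ≤ ∫ h, φ (h + w • (e j : H)) ∂(Measure.map (η 1) P) + M * c * |w| := by
  obtain ⟨L, hL⟩ := hD.2.2.2.2.2.2.1 j
  have hbp : 0 < b j := lt_of_le_of_ne (hD.1 j) (hb j).symm
  refine ⟨4 * L / b j, by positivity, fun φ M hφ h0 hM w => ?_⟩
  set X := ξ j 1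
  set Y : Ω → H := fun ω => η 1 ω - (b j * ξ j 1 ω) • (e j : H) with hY
  have hX : Measurable X := hD.2.2.2.1 j 1
  have hYm : Measurable Y := (hη 1).sub ((hX.const_mul _).smul_const _)
  have hXY : IndepFun Y X P := by
    rw [IndepFun_iff_Indep]
    have h1 := sigT_indep hD (T := {q | q ≠ (j, 1)}) (T' := {(j, 1)})
      (by rw [Set.disjoint_left]; rintro a h h'; exact h h')
    refine indep_of_indep_of_le_left (indep_of_indep_of_le_right h1 ?_) ?_
    · exact (xi_meas_sigT (Set.mem_singleton _)).comap_le
    · refine (rest_meas_sigT hD 1 j _ ?_).comap_le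
      intro i hi h; exact hi (by simpa using congrArg Prod.fst h)
  have hprod := (indepFun_iff_map_prod_eq_prod_map_map hYm.aemeasurable hX.aemeasurable).1 hXY
  have := Measure.isProbabilityMeasure_map (μ := P) hX.aemeasurable
  have := Measure.isProbabilityMeasure_map (μ := P) hYm.aemeasurable
  have key : ∀ w : ℝ, ∫ h, φ (h + w • (e j : H)) ∂(Measure.map (η 1) P)
      = ∫ y, ∫ x, φ (y + (b j * x + w) • (e j : H)) ∂(Measure.map X P) ∂(Measure.map Y P) := by
    intro w
    have hm : Measurable (fun q : H × ℝ => φ (q.1 + (b j * q.2 + w) • (e j : H))) := by fun_prop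
    rw [← integral_prod (f := fun q : H × ℝ => φ (q.1 + (b j * q.2 + w) • (e j : H))), ← hprod, integral_map (hYm.prodMk hX).aemeasurable hm.aestronglyMeasurable,
      integral_map (hη 1).aemeasurable
        (by have : Measurable (fun h => φ (h + w • (e j : H))) := by fun_prop
            exact this.aestronglyMeasurable)]
    · refine integral_congr_ae (ae_of_all _ fun ω => ?_)
      simp only [hY, X, add_smul]
      congr 1; abel
    · refine Integrable.of_bound hm.aestronglyMeasurable M (ae_of_all _ fun z => ?_)
      rw [Real.norm_eq_abs, abs_of_nonneg (h0 _)]; exact hM _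
  have hinner : ∀ w : ℝ, Integrable (fun y => ∫ x, φ (y + (b j * x + w) • (e j : H)) ∂(Measure.map X P))
      (Measure.map Y P) := by
    intro w
    have hm : Measurable (fun q : H × ℝ => φ (q.1 + (b j * q.2 + w) • (e j : H))) := by fun_prop
    have hi : Integrable (fun q : H × ℝ => φ (q.1 + (b j * q.2 + w) • (e j : H)))
        ((Measure.map Y P).prod (Measure.map X P)) := by
      refine Integrable.of_bound hm.aestronglyMeasurable M (ae_of_all _ fun z => ?_)
      rw [Real.norm_eq_abs, abs_of_nonneg (h0 _)]; exact hM _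
    exact hi.integral_prod_left
  have k0 := key 0
  simp only [zero_smul, add_zero] at k0
  rw [k0, key w]
  have h00 := hinner 0
  simp only [add_zero] at h00
  have : ∫ y, ∫ x, φ (y + (b j * x) • (e j : H)) ∂(Measure.map X P) ∂(Measure.map Y P)
      ≤ ∫ y, (∫ x, φ (y + (b j * x + w) • (e j : H)) ∂(Measure.map X P) + M * (4 * L / b j) * |w|)
        ∂(Measure.map Y P) := by
    refine integral_mono h00 ((hinner w).add (integrable_const _)) fun y => ?_
    have hs := shift_real hL (hD.2.2.2.2.2.2.2.2 j) (hD.2.2.2.2.2.1 j 1)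
      (g := fun x => φ (y + (b j * x) • (e j : H))) (M := M) (by fun_prop) (fun _ => h0 _)
      (fun _ => hM _) (w / b j)
    refine hs.trans (le_of_eq ?_)
    congr 1
    · refine integral_congr_ae (ae_of_all _ fun x => ?_)
      simp only
      rw [mul_add, mul_div_cancel₀ _ (hb j)]
    · rw [abs_div, abs_of_pos hbp]; ring
  refine this.trans (le_of_eq ?_)
  rw [integral_add (hinner w) (integrable_const _)]
  simp

lemma shift_proj (hD : CondD P e η b ξ p) (hη : ∀ k, Measurable (η k)) (hb : ∀ j, b j ≠ 0) (N : ℕ) :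
    ∃ c : ℝ, 0 ≤ c ∧ ∀ (φ : H → ℝ) (M : ℝ), Measurable φ → (∀ z, 0 ≤ φ z) → (∀ z, φ z ≤ M) →
      ∀ v : H, ∫ h, φ h ∂(Measure.map (η 1) P)
        ≤ ∫ h, φ (h + projB e N v) ∂(Measure.map (η 1) P) + M * c * ‖v‖ := by
  induction N with
  | zero =>
    refine ⟨0, le_rfl, fun φ M hφ h0 hM v => ?_⟩
    simp [projB]
  | succ N ih =>
    obtain ⟨c, hc, h⟩ := ih
    obtain ⟨d, hd, h'⟩ := shift_coord hD hη hb N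
    refine ⟨c + d, by positivity, fun φ M hφ h0 hM v => ?_⟩
    have h1 := h φ M hφ h0 hM v
    have h2 := h' (fun z => φ (z + projB e N v)) M (by fun_prop) (fun _ => h0 _) (fun _ => hM _)
      (e.repr v N)
    have h3 : M * d * |e.repr v N| ≤ M * d * ‖v‖ :=
      mul_le_mul_of_nonneg_left (repr_abs_le e v N) (mul_nonneg ((h0 0).trans (hM 0)) hd)
    have h4 : ∀ z : H, z + projB e (N + 1) v = z + e.repr v N • (e N : H) + projB e N v := by
      intro z
      simp only [projB, Finset.sum_range_succ]
      abel
    simp only [h4]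
    linarith [h1, h2, h3]

lemma oneStep_A (hD : CondD P e η b ξ p) (hη : ∀ k, Measurable (η k)) (hb : ∀ j, b j ≠ 0)
    {S : H → H} {A : Set H} (hA : CondA S) (hC : CondC S e) (hAc : IsCompact A)
    (hne : A.Nonempty)
    (hinv : ∀ x ∈ A, ∀ᵐ h ∂(Measure.map (η 1) P), S x + h ∈ A) :
    OneStep S (Measure.map (η 1) P) A := by
  set ν := Measure.map (η 1) P with hν
  have : IsProbabilityMeasure ν := Measure.isProbabilityMeasure_map (hη 1).aemeasurable
  intro γ hγ
  obtain ⟨R', hR'⟩ := hAc.isBounded.subset_closedBall 0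
  set R : ℝ := max R' 2
  have hR : A ⊆ Metric.closedBall 0 R := hR'.trans (Metric.closedBall_subset_closedBall (le_max_left _ _))
  have hR2 : (1:ℝ) < R := lt_of_lt_of_le (by norm_num) (le_max_right _ _)
  obtain ⟨C, hC0, -, -, -, -, -, hlip, -⟩ := hA.2 R 1 one_pos hR2
  obtain ⟨g, -, -, hg0, hgC⟩ := hC R (by linarith)
  obtain ⟨N, hN⟩ := (hg0.eventually_lt_const hγ).exists
  obtain ⟨c, hc, hs⟩ := shift_proj hD hη hb N
  refine ⟨c * C, by positivity, fun f M D hf hM hD0 hfb hfl x hx y hy => ?_⟩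
  have hfL : LipschitzOnWith (Real.toNNReal D) f A := by
    refine LipschitzOnWith.of_le_add_mul (Real.toNNReal D) fun x hx y hy => ?_
    rw [Real.coe_toNNReal _ hD0, dist_eq_norm]
    exact hfl x hx y hy
  obtain ⟨F, hFl, hFe⟩ := hfL.extend_real
  set G : H → ℝ := fun z => max 0 (min M (F z)) with hG
  have hGc : Continuous G := by have := hFl.continuous; fun_prop
  have hGe : ∀ z ∈ A, G z = f z := by
    intro z hz
    simp only [hG, ← hFe hz, min_eq_right (hfb z hz).2, max_eq_right (hfb z hz).1]
  have hG0 : ∀ z, 0 ≤ G z := fun z => le_max_left _ _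
  have hGM : ∀ z, G z ≤ M := fun z => max_le hM (min_le_left _ _)
  have hGl : ∀ z w, G z ≤ G w + D * ‖z - w‖ := by
    intro z w
    have h1 := hFl.dist_le_mul z w
    rw [Real.dist_eq, Real.coe_toNNReal _ hD0, dist_eq_norm] at h1
    have h2 : F z ≤ F w + D * ‖z - w‖ := by linarith [le_abs_self (F z - F w)]
    have h3 : 0 ≤ D * ‖z - w‖ := by positivity
    simp only [hG]
    refine max_le (add_nonneg (le_max_left _ _) h3) ?_
    rcases le_total M (F w) with h | h
    · rw [min_eq_left h]; linarith [min_le_left M (F z), le_max_right 0 M]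
    · rw [min_eq_right h]; linarith [min_le_right M (F z), le_max_right 0 (F w)]
  have hrep : ∀ x ∈ A, ∫ h, f (S x + h) ∂ν = ∫ h, G (S x + h) ∂ν := by
    intro x hx
    refine integral_congr_ae ?_
    filter_upwards [hinv x hx] with h hh
    rw [hGe _ hh]
  have hGi : ∀ v, Integrable (fun h => G (v + h)) ν := by
    intro v
    refine Integrable.of_bound (by fun_prop) M (ae_of_all _ fun z => ?_)
    rw [Real.norm_eq_abs, abs_of_nonneg (hG0 _)]; exact hGM _
  rw [hrep x hx, hrep y hy]
  have h1 := hs (fun h => G (S x + h)) M (by fun_prop) (fun _ => hG0 _) (fun _ => hGM _) (S y - S x)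
  have h2 : ∫ h, G (S x + (h + projB e N (S y - S x))) ∂ν ≤ ∫ h, (G (S y + h) + D * (γ * ‖x - y‖)) ∂ν := by
    refine integral_mono ?_ ((hGi _).add (integrable_const _)) fun h => ?_
    · have := hGi (S x + projB e N (S y - S x))
      refine this.congr (ae_of_all _ fun h => ?_)
      exact congrArg G (by abel)
    · refine (hGl _ (S y + h)).trans ?_
      gcongr
      have h3 := hgC N y (hR hy) x (hR hx)
      rw [← norm_neg]
      refine le_trans (le_of_eq ?_) (h3.trans ?_)
      · congr 1; abel
      · rw [norm_sub_rev y x]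
        exact mul_le_mul_of_nonneg_right hN.le (norm_nonneg _)
  rw [integral_add (hGi _) (integrable_const _)] at h2
  simp only [integral_const, probReal_univ, one_smul] at h2
  have h5 : ‖S y - S x‖ ≤ C * ‖x - y‖ := by
    rw [norm_sub_rev x y]; exact hlip y (hR hy) x (hR hx)
  have h6 : M * c * ‖S y - S x‖ ≤ M * c * (C * ‖x - y‖) :=
    mul_le_mul_of_nonneg_left h5 (by positivity)
  calc _ ≤ _ := h1
    _ ≤ (∫ h, G (S y + h) ∂ν + D * (γ * ‖x - y‖)) + M * c * (C * ‖x - y‖) := add_le_add h2 h6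
    _ = _ := by ring

end Noise

set_option linter.unusedSectionVars false

/-- reversed history `[x_{n-1}, …, x_0]` -/
def hist {X : Type*} (x : ℕ → X) : ℕ → List X
  | 0 => []
  | n + 1 => x n :: hist x n

lemma hist_map {X Ω : Type*} (u : ℕ → Ω → X) (ω : Ω) (n : ℕ) :
    (hist u n).map (fun f => f ω) = hist (fun k => u k ω) n := by
  induction n with
  | zero => rfl
  | succ n ih => simp [hist, ih]

lemma hist_mem {X : Type*} (x : ℕ → X) (n : ℕ) : ∀ f ∈ hist x n, ∃ k < n, f = x k := by
  induction n with
  | zero => simp [hist]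
  | succ n ih =>
    intro f hf
    simp only [hist, List.mem_cons] at hf
    rcases hf with rfl | hf
    · exact ⟨n, by omega, rfl⟩
    · obtain ⟨k, hk, h⟩ := ih f hf; exact ⟨k, by omega, h⟩

section Link
variable [MeasurableSpace H] [BorelSpace H] [SecondCountableTopology H]
  {Ω : Type} [mΩ : MeasurableSpace Ω] {P : Measure Ω} [IsProbabilityMeasure P]
  {e : HilbertBasis ℕ ℝ H} {η : ℕ → Ω → H} {b : ℕ → ℝ} {ξ : ℕ → ℕ → Ω → ℝ} {p : ℕ → ℝ → ℝ}
  {S : H → H} {Ψ : List H → ℝ} {L c c' : ℝ}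

lemma traj_meas_sub {m : MeasurableSpace Ω} (hS : Measurable S) {u₀ : Ω → H} (n : ℕ)
    (h0 : Measurable[m] u₀) (hη : ∀ k, 1 ≤ k → k ≤ n → Measurable[m] (η k)) :
    Measurable[m] (traj S η u₀ n) := by
  induction n with
  | zero => exact h0
  | succ n ih =>
    exact (hS.comp (ih fun k h1 h2 => hη k h1 (by omega))).add (hη (n + 1) (by omega) le_rfl)

lemma indep_integral {Ω' : Type} {m : MeasurableSpace Ω'} {X : Ω → Ω'} (hX : Measurable X)
    {Y : Ω → H} (hY : Measurable Y)
    (hind : IndepFun X Y P) (g : Ω' × H → ℝ)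
    (hg : Measurable g) (hgb : ∀ q, |g q| ≤ 1) :
    ∫ ω, ∫ h, g (X ω, h) ∂(Measure.map Y P) ∂P = ∫ ω, g (X ω, Y ω) ∂P := by
  have hprod := (indepFun_iff_map_prod_eq_prod_map_map hX.aemeasurable hY.aemeasurable).1 hind
  have : IsProbabilityMeasure (Measure.map Y P) := Measure.isProbabilityMeasure_map hY.aemeasurable
  have : IsProbabilityMeasure (Measure.map X P) := Measure.isProbabilityMeasure_map hX.aemeasurable
  have h1 : ∫ ω, g (X ω, Y ω) ∂P = ∫ q, g q ∂(Measure.map (fun ω => (X ω, Y ω)) P) := by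
    rw [integral_map (hX.prodMk hY).aemeasurable hg.aestronglyMeasurable]
  rw [h1, hprod, integral_prod]
  · rw [integral_map hX.aemeasurable]
    exact (hg.stronglyMeasurable.integral_prod_right').aestronglyMeasurable
  · refine Integrable.of_bound hg.aestronglyMeasurable 1 (ae_of_all _ fun q => ?_)
    simpa using hgb q

lemma link_step (hD : CondD P e η b ξ p) (hη : ∀ k, Measurable (η k)) (hS : Measurable S)
    (hΨ : GoodPsi Ψ L c c') (x : H) (m n : ℕ) :
    ∫ ω, Rop S (Measure.map (η 1) P) Ψ (m + 1) (traj S η (fun _ => x) n ω)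
        (hist (fun k => traj S η (fun _ => x) k ω) n) ∂P
      = ∫ ω, Rop S (Measure.map (η 1) P) Ψ m (traj S η (fun _ => x) (n + 1) ω)
        (hist (fun k => traj S η (fun _ => x) k ω) (n + 1)) ∂P := by
  set ν := Measure.map (η 1) P with hν
  have : IsProbabilityMeasure ν := Measure.isProbabilityMeasure_map (hη 1).aemeasurable
  set u := traj S η (fun _ => x)
  set T : Set (ℕ × ℕ) := {q | q.2 ≤ n} with hT
  have hu : ∀ k ≤ n, Measurable[sigT ξ T] (u k) := by
    intro k hk
    refine traj_meas_sub hS k measurable_const fun i _ hi => eta_meas_sigT hD i T fun j => ?_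
    simp only [hT, Set.mem_ofPred_eq]; omega
  have hind : Indep (sigT ξ T) (MeasurableSpace.comap (η (n + 1)) inferInstance) P := by
    refine indep_of_indep_of_le_right (sigT_indep hD (T := T) (T' := {q | q.2 = n + 1}) ?_) ?_
    · rw [Set.disjoint_left]; intro a h h'
      simp only [hT, Set.mem_ofPred_eq] at h h'; omega
    · exact (eta_meas_sigT hD (n + 1) _ fun j => rfl).comap_le
  set g : Ω × H → ℝ := fun q => Rop S ν Ψ m (S (u n q.1) + q.2)
    (u n q.1 :: hist (fun k => u k q.1) n) with hg
  have hgm : Measurable[(sigT ξ T).prod inferInstance] g := by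
    let _ : MeasurableSpace Ω := sigT ξ T
    have hf : Measurable (fun q : Ω × H => q.1) := measurable_fst
    have := Rop_meas (ν := ν) hS hΨ m (α := Ω × H) (fun q => S (u n q.1) + q.2)
      ((fun q => u n q.1) :: (hist (fun k => fun q : Ω × H => u k q.1) n))
      ((hS.comp ((hu n le_rfl).comp hf)).add measurable_snd)
      (by
        intro f hf'
        simp only [List.mem_cons] at hf'
        rcases hf' with rfl | hf'
        · exact (hu n le_rfl).comp hf
        · obtain ⟨k, hk, rfl⟩ := hist_mem _ _ f hf'
          exact (hu k hk.le).comp hf)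
    simpa [hist_map] using this
  have hif : @IndepFun Ω Ω H mΩ (sigT ξ T) _ id (η (n + 1)) P := by
    refine (@IndepFun_iff_Indep Ω Ω H mΩ (sigT ξ T) _ id (η (n + 1)) P).2 ?_
    rw [MeasurableSpace.comap_id]; exact hind
  have h := indep_integral (m := sigT ξ T) (X := id) (measurable_id'' (sigT_le hD T)) (hη (n + 1)) hif g hgm (by
    intro q
    have := Rop_bd (S := S) (ν := ν) hΨ m (S (u n q.1) + q.2) (u n q.1 :: hist (fun k => u k q.1) n)
    rw [abs_of_nonneg this.1]; exact this.2)
  rw [eta_law hD hη (n + 1), ← hν] at h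
  exact h

lemma link_det (hD : CondD P e η b ξ p) (hη : ∀ k, Measurable (η k)) (hS : Measurable S)
    (hΨ : GoodPsi Ψ L c c') (x : H) (m : ℕ) : ∀ n,
    ∫ ω, Rop S (Measure.map (η 1) P) Ψ m (traj S η (fun _ => x) n ω)
        (hist (fun k => traj S η (fun _ => x) k ω) n) ∂P
      = ∫ ω, Ψ (hist (fun k => traj S η (fun _ => x) k ω) (n + m + 1)) ∂P := by
  induction m with
  | zero => intro n; rfl
  | succ m ih =>
    intro n
    rw [link_step hD hη hS hΨ, ih (n + 1), show n + 1 + m + 1 = n + (m + 1) + 1 by ring]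

lemma traj_factor (u₀ : Ω → H) (ω : Ω) (n : ℕ) :
    traj S η u₀ n ω = traj S (fun k (q : H × (ℕ → H)) => q.2 k) (fun q => q.1) n
      (u₀ ω, fun k => η k ω) := by
  induction n with
  | zero => rfl
  | succ n ih => simp only [traj, ih]

lemma link (hD : CondD P e η b ξ p) (hη : ∀ k, Measurable (η k)) (hS : Measurable S)
    (hΨ : GoodPsi Ψ L c c') (u₀ : Ω → H) (hu₀ : Measurable u₀)
    (hindep : IndepFun u₀ (fun ω (k : ℕ) => η k ω) P) (m : ℕ) :
    ∫ ω, Ψ (hist (fun k => traj S η u₀ k ω) (m + 1)) ∂P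
      = ∫ x, Rop S (Measure.map (η 1) P) Ψ m x [] ∂(Measure.map u₀ P) := by
  have hηm : Measurable (fun ω (k : ℕ) => η k ω) := measurable_pi_lambda _ hη
  have hprod := (indepFun_iff_map_prod_eq_prod_map_map hu₀.aemeasurable hηm.aemeasurable).1 hindep
  have : IsProbabilityMeasure (Measure.map u₀ P) := Measure.isProbabilityMeasure_map hu₀.aemeasurable
  have : IsProbabilityMeasure (Measure.map (fun ω (k : ℕ) => η k ω) P) :=
    Measure.isProbabilityMeasure_map hηm.aemeasurable
  set U : ℕ → H × (ℕ → H) → H := traj S (fun k (q : H × (ℕ → H)) => q.2 k) (fun q => q.1) with hU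
  have hUm : ∀ n, Measurable (U n) := fun n => traj_meas_sub hS n measurable_fst
    fun k _ _ => (measurable_pi_apply k).comp measurable_snd
  set g : H × (ℕ → H) → ℝ := fun q => Ψ (hist (fun k => U k q) (m + 1)) with hg
  have hgm : Measurable g := by
    have := hΨ.meas (hist U (m + 1)) (by
      intro f hf; obtain ⟨k, _, rfl⟩ := hist_mem _ _ f hf; exact hUm k)
    simpa [hist_map] using this
  have h1 : ∫ ω, Ψ (hist (fun k => traj S η u₀ k ω) (m + 1)) ∂P
      = ∫ q, g q ∂(Measure.map (fun ω => (u₀ ω, fun (k : ℕ) => η k ω)) P) := by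
    rw [integral_map (hu₀.prodMk hηm).aemeasurable hgm.aestronglyMeasurable]
    simp only [hg, hU, ← traj_factor]
  rw [h1, hprod, integral_prod]
  · refine integral_congr_ae (ae_of_all _ fun x => ?_)
    have h2 := link_det hD hη hS hΨ x m 0
    simp only [traj, hist, zero_add, integral_const, probReal_univ, one_smul] at h2
    simp only
    rw [h2, integral_map (f := fun y => g (x, y)) hηm.aemeasurable (hgm.comp measurable_prodMk_left).aestronglyMeasurable]
    refine integral_congr_ae (ae_of_all _ fun ω => ?_)
    simp only [hg]
    have : (fun k => U k (x, fun k => η k ω)) = fun k => traj S η (fun _ => x) k ω := by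
      funext k; rw [traj_factor (S := S) (η := η) (fun _ => x) ω k]
    rw [this]; rfl
  · refine Integrable.of_bound hgm.aestronglyMeasurable 1 (ae_of_all _ fun q => ?_)
    rw [Real.norm_eq_abs, abs_of_pos (hΨ.pos _)]; exact hΨ.le1 _

lemma traj_mem {K A : Set H} (hD : CondD P e η b ξ p) (hη : ∀ k, Measurable (η k))
    (hinv : ∀ x ∈ A, ∀ h ∈ K, S x + h ∈ A) (hK : ∀ᵐ h ∂(Measure.map (η 1) P), h ∈ K)
    (u₀ : Ω → H) (hu : ∀ᵐ ω ∂P, u₀ ω ∈ A) : ∀ᵐ ω ∂P, ∀ n, traj S η u₀ n ω ∈ A := by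
  have h1 : ∀ᵐ ω ∂P, ∀ k, η k ω ∈ K := by
    refine ae_all_iff.2 fun k => ?_
    rw [← eta_law hD hη k] at hK
    exact ae_of_ae_map (hη k).aemeasurable hK
  filter_upwards [h1, hu] with ω h1 h2 n
  induction n with
  | zero => exact h2
  | succ n ih => exact hinv _ ih _ (h1 _)

end Link

set_option linter.unusedSectionVars false

section Functionals
variable {E : Type} [NormedAddCommGroup E] [MeasurableSpace E] [BorelSpace E]
  [SecondCountableTopology E]
variable [MeasurableSpace H] [BorelSpace H] [SecondCountableTopology H]

/-- bounded cylindrical functionals, Lipschitz in each coordinate -/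
structure GoodF (F : (ℕ → H) → E) (m : ℕ) (B L : ℝ) : Prop where
  hB : 0 ≤ B
  hL : 0 ≤ L
  bd : ∀ x, ‖F x‖ ≤ B
  dep : ∀ x y : ℕ → H, (∀ j ≤ m, x j = y j) → F x = F y
  lip : ∀ (i : ℕ) (x y : ℕ → H), (∀ j, j ≠ i → x j = y j) → ‖F x - F y‖ ≤ L * ‖x i - y i‖
  meas : Measurable F

/-- the functional on reversed histories -/
def gF (F : (ℕ → H) → E) (m : ℕ) (l : List H) : E :=
  F (fun j => if j ≤ m then l.getD (m - j) 0 else 0)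

/-- its sum along a history -/
def aF (F : (ℕ → H) → E) (m : ℕ) : List H → E
  | [] => 0
  | x :: l => gF F m (x :: l) + aF F m l

variable {F : (ℕ → H) → E} {m : ℕ} {B L : ℝ}

lemma gF_loc (F : (ℕ → H) → E) (m : ℕ) (l₁ l₂ l₃ : List H) (h : m + 1 ≤ l₁.length) :
    gF F m (l₁ ++ l₂) = gF F m (l₁ ++ l₃) := by
  unfold gF
  congr 1; funext j
  split_ifs with hj
  · rw [List.getD_append _ _ _ _ (by omega), List.getD_append _ _ _ _ (by omega)]
  · rfl

lemma gF_lip (hF : GoodF F m B L) (l₁ l₂ : List H) (x y : H) :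
    ‖gF F m (l₁ ++ x :: l₂) - gF F m (l₁ ++ y :: l₂)‖ ≤ L * ‖x - y‖ := by
  by_cases h : m + 1 ≤ l₁.length
  · rw [gF_loc F m l₁ _ (y :: l₂) h, sub_self, norm_zero]
    exact mul_nonneg hF.hL (norm_nonneg _)
  · have := hF.lip (m - l₁.length)
      (fun j => if j ≤ m then (l₁ ++ x :: l₂).getD (m - j) 0 else 0)
      (fun j => if j ≤ m then (l₁ ++ y :: l₂).getD (m - j) 0 else 0) (by
        intro j hj
        split_ifs with hjm
        · rcases lt_or_ge (m - j) l₁.length with h1 | h1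
          · rw [List.getD_append _ _ _ _ h1, List.getD_append _ _ _ _ h1]
          · rw [List.getD_append_right _ _ _ _ h1, List.getD_append_right _ _ _ _ h1]
            have : m - j - l₁.length = (m - j - l₁.length - 1) + 1 := by omega
            rw [this, List.getD_cons_succ, List.getD_cons_succ]
        · rfl)
    have h2 : m - (m - l₁.length) = l₁.length := by omega
    simpa [h2, List.getD_append_right, gF] using this

lemma aF_tail (F : (ℕ → H) → E) (m : ℕ) (T₁ T₂ : List H) (β : ℝ)
    (hβ : ∀ l₁, ‖gF F m (l₁ ++ T₁) - gF F m (l₁ ++ T₂)‖ ≤ β) (l₁ : List H) :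
    ‖aF F m (l₁ ++ T₁) - aF F m (l₁ ++ T₂) - (aF F m T₁ - aF F m T₂)‖
      ≤ β * (min l₁.length (m + 1) : ℕ) := by
  have hβ0 : 0 ≤ β := (norm_nonneg _).trans (hβ [])
  induction l₁ with
  | nil => simp
  | cons a l ih =>
    have h1 : aF F m (a :: l ++ T₁) - aF F m (a :: l ++ T₂) - (aF F m T₁ - aF F m T₂)
        = (gF F m (a :: l ++ T₁) - gF F m (a :: l ++ T₂))
          + (aF F m (l ++ T₁) - aF F m (l ++ T₂) - (aF F m T₁ - aF F m T₂)) := by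
      simp only [List.cons_append, aF]; abel
    rw [h1]
    refine (norm_add_le _ _).trans ?_
    by_cases h : m + 1 ≤ (a :: l).length
    · rw [gF_loc F m (a :: l) _ T₂ h, sub_self, norm_zero, zero_add]
      refine ih.trans (mul_le_mul_of_nonneg_left ?_ hβ0)
      exact_mod_cast min_le_min_right _ (by simp)
    · have h2 : min (a :: l).length (m + 1) = min l.length (m + 1) + 1 := by
        simp only [List.length_cons] at h ⊢; omega
      rw [h2]
      have := hβ (a :: l)
      push_cast at ih ⊢
      linarith

lemma aF_tail' (F : (ℕ → H) → E) (m : ℕ) (T₁ T₂ : List H) (β : ℝ)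
    (hβ : ∀ l₁, ‖gF F m (l₁ ++ T₁) - gF F m (l₁ ++ T₂)‖ ≤ β) (l₁ : List H) :
    ‖aF F m (l₁ ++ T₁) - aF F m (l₁ ++ T₂) - (aF F m T₁ - aF F m T₂)‖ ≤ β * (m + 1) := by
  have hβ0 : 0 ≤ β := (norm_nonneg _).trans (hβ [])
  refine (aF_tail F m T₁ T₂ β hβ l₁).trans (mul_le_mul_of_nonneg_left ?_ hβ0)
  exact_mod_cast min_le_right _ _

lemma gF_diff (hF : GoodF F m B L) (l l' : List H) : ‖gF F m l - gF F m l'‖ ≤ 2 * B := by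
  refine (norm_sub_le _ _).trans ?_
  have h1 := hF.bd (fun j => if j ≤ m then l.getD (m - j) 0 else 0)
  have h2 := hF.bd (fun j => if j ≤ m then l'.getD (m - j) 0 else 0)
  unfold gF; linarith

lemma gF_bd (hF : GoodF F m B L) (l : List H) : ‖gF F m l‖ ≤ B := hF.bd _

lemma gF_meas (hF : GoodF F m B L) {α : Type} [MeasurableSpace α] (fs : List (α → H))
    (hfs : ∀ f ∈ fs, Measurable f) : Measurable (fun a => gF F m (fs.map (fun f => f a))) := by
  refine hF.meas.comp (measurable_pi_lambda _ fun j => ?_)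
  split_ifs
  · have : ∀ a, (fs.map (fun f => f a)).getD (m - j) 0 = (fs.getD (m - j) (fun _ => 0)) a := by
      intro a
      rw [← List.getD_map (f := fun f : α → H => f a)]
    simp only [this]
    rcases lt_or_ge (m - j) fs.length with h | h
    · rw [List.getD_eq_getElem _ _ h]; exact hfs _ (List.getElem_mem h)
    · rw [List.getD_eq_default _ _ h]; exact measurable_const
  · exact measurable_const

lemma aF_meas (hF : GoodF F m B L) {α : Type} [MeasurableSpace α] (fs : List (α → H))
    (hfs : ∀ f ∈ fs, Measurable f) : Measurable (fun a => aF F m (fs.map (fun f => f a))) := by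
  induction fs with
  | nil => exact measurable_const
  | cons f l ih =>
    exact (gF_meas hF (f :: l) hfs).add (ih fun g hg => hfs g (List.mem_cons_of_mem _ hg))

lemma exp_neg_norm_le {a b : E} {t : ℝ} (h : ‖a - b‖ ≤ t) :
    Real.exp (-‖a‖) ≤ Real.exp t * Real.exp (-‖b‖) := by
  rw [← Real.exp_add, Real.exp_le_exp]
  have := norm_sub_norm_le b a
  rw [norm_sub_rev] at this
  linarith

lemma goodPsi_aF (hF : GoodF F m B L) :
    GoodPsi (fun l => Real.exp (-‖aF F m l‖)) (L * (m + 2)) (B + 2 * B * (m + 1))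
      (2 * B * (m + 1)) := by
  have hB := hF.hB
  have hL := hF.hL
  have hins : ∀ (l₁ l₂ : List H) (y : H),
      ‖aF F m (l₁ ++ y :: l₂) - aF F m (l₁ ++ l₂)‖ ≤ B + 2 * B * (m + 1) := by
    intro l₁ l₂ y
    have h := aF_tail' F m (y :: l₂) l₂ (2 * B) (fun _ => gF_diff hF _ _) l₁
    have h2 : aF F m (y :: l₂) - aF F m l₂ = gF F m (y :: l₂) := by simp [aF]
    rw [h2] at h
    have h3 := gF_bd hF (y :: l₂)
    have h4 := norm_add_le (aF F m (l₁ ++ y :: l₂) - aF F m (l₁ ++ l₂) - gF F m (y :: l₂)) (gF F m (y :: l₂))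
    rw [sub_add_cancel] at h4
    linarith
  refine ⟨by positivity, by positivity, by positivity, fun _ => Real.exp_pos _, fun l => ?_,
    fun fs hfs => ?_, fun l₁ l₂ x y => ?_, fun l₁ l₂ y => ?_, fun l₁ l₂ y => ?_, fun l₁ l₂ => ?_⟩
  · rw [Real.exp_le_one_iff]; simp
  · exact (aF_meas hF fs hfs).norm.neg.exp
  · refine exp_neg_norm_le ?_
    have h := aF_tail' F m (x :: l₂) (y :: l₂) (L * ‖x - y‖) (fun l => gF_lip hF _ _ _ _) l₁
    have h2 : aF F m (x :: l₂) - aF F m (y :: l₂) = gF F m ([] ++ x :: l₂) - gF F m ([] ++ y :: l₂) := by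
      simp [aF]
    have h3 := gF_lip hF [] l₂ x y
    rw [← h2] at h3
    have h4 := norm_add_le (aF F m (l₁ ++ x :: l₂) - aF F m (l₁ ++ y :: l₂) - (aF F m (x :: l₂) - aF F m (y :: l₂))) (aF F m (x :: l₂) - aF F m (y :: l₂))
    rw [sub_add_cancel] at h4
    linarith
  · exact exp_neg_norm_le (hins _ _ _)
  · refine exp_neg_norm_le ?_
    rw [norm_sub_rev]; exact hins _ _ _
  · have h := aF_tail' F m l₂ [] (2 * B) (fun _ => gF_diff hF _ _) l₁
    simp only [List.append_nil, aF, sub_zero] at h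
    rw [← Real.exp_add, ← Real.exp_add, Real.exp_le_exp]
    have h4 := norm_add_le (aF F m l₁) (aF F m l₂)
    have h5 : aF F m (l₁ ++ l₂) = (aF F m (l₁ ++ l₂) - aF F m l₁ - aF F m l₂) + (aF F m l₁ + aF F m l₂) := by abel
    have h6 := norm_add_le (aF F m (l₁ ++ l₂) - aF F m l₁ - aF F m l₂) (aF F m l₁ + aF F m l₂)
    rw [← h5] at h6
    linarith

lemma hist_length {X : Type*} (x : ℕ → X) (n : ℕ) : (hist x n).length = n := by
  induction n with
  | zero => rfl
  | succ n ih => simp [hist, ih]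

lemma hist_getD {X : Type*} (x : ℕ → X) (d : X) (n i : ℕ) (h : i < n) :
    (hist x n).getD i d = x (n - 1 - i) := by
  induction n generalizing i with
  | zero => omega
  | succ n ih =>
    rcases i with _ | i
    · simp [hist]
    · simp only [hist, List.getD_cons_succ]
      rw [ih i (by omega)]; congr 1; omega

lemma aF_hist (hF : GoodF F m B L) (u : ℕ → H) (k : ℕ) :
    aF F m (hist u (k + m)) - aF F m (hist u m) = ∑ n ∈ Finset.range k, F (fun j => u (n + j)) := by
  induction k with
  | zero => simp
  | succ k ih =>
    rw [Finset.sum_range_succ, ← ih, show k + 1 + m = (k + m) + 1 by ring]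
    have : gF F m (hist u (k + m + 1)) = F (fun j => u (k + j)) := by
      unfold gF
      refine hF.dep _ _ fun j hj => ?_
      simp only [hj, if_true]
      rw [hist_getD _ _ _ _ (by omega)]; congr 1; omega
    simp only [hist, aF] at this ⊢
    rw [this]; abel

lemma aF_hist_add (hF : GoodF F m B L) (u : ℕ → H) (k i : ℕ) :
    ‖aF F m (hist u (k + i)) - aF F m (hist u k)‖ ≤ B * i := by
  induction i with
  | zero => simp
  | succ i ih =>
    rw [← add_assoc]
    simp only [hist, aF]
    have h1 := gF_bd hF (u (k + i) :: hist u (k + i))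
    have h2 := norm_add_le (gF F m (u (k + i) :: hist u (k + i))) (aF F m (hist u (k + i)) - aF F m (hist u k))
    rw [← add_sub_assoc] at h2
    push_cast
    linarith

lemma aF_compare (hF : GoodF F m B L) (u : ℕ → H) (k : ℕ) :
    ‖aF F m (hist u k) - ∑ n ∈ Finset.range k, F (fun j => u (n + j))‖ ≤ 2 * B * m := by
  rw [← aF_hist hF u k]
  have h1 := aF_hist_add hF u k m
  have h2 := aF_hist_add hF u 0 m
  simp only [zero_add, hist, aF, sub_zero] at h2
  have h3 : aF F m (hist u k) - (aF F m (hist u (k + m)) - aF F m (hist u m))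
    = aF F m (hist u m) - (aF F m (hist u (k + m)) - aF F m (hist u k)) := by abel
  rw [h3]
  refine (norm_sub_le _ _).trans ?_
  linarith

lemma scgf {Ω : Type} [MeasurableSpace Ω] {P : Measure Ω} [IsProbabilityMeasure P]
    {u : ℕ → Ω → H} (hu : ∀ k, Measurable (u k))
    (hlim : ∀ (Ψ : List H → ℝ) (L c c' : ℝ), GoodPsi Ψ L c c' → ∃ Λ : ℝ,
      Tendsto (fun k : ℕ => Real.log (∫ ω, Ψ (hist (fun j => u j ω) k) ∂P) / k) atTop (𝓝 Λ))
    (hF : GoodF F m B L) : ∃ Λ : ℝ,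
      Tendsto (fun k : ℕ => Real.log (∫ ω, Real.exp (-‖∑ n ∈ Finset.range k,
        F (fun j => u (n + j) ω)‖) ∂P) / k) atTop (𝓝 Λ) := by
  have hΨ := goodPsi_aF hF
  obtain ⟨Λ, hΛ⟩ := hlim _ _ _ _ hΨ
  refine ⟨Λ, ?_⟩
  set C : ℝ := 2 * B * m
  have hm1 : ∀ k, Measurable (fun ω => Real.exp (-‖aF F m (hist (fun j => u j ω) k)‖)) := by
    intro k
    have := hΨ.meas (hist u k) (by
      intro f hf; obtain ⟨i, _, rfl⟩ := hist_mem _ _ f hf; exact hu i)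
    simpa [hist_map] using this
  have hm2 : ∀ k, Measurable (fun ω => Real.exp (-‖∑ n ∈ Finset.range k, F (fun j => u (n + j) ω)‖)) := by
    intro k
    refine (Finset.measurable_fun_sum _ fun n _ => ?_).norm.neg.exp
    exact hF.meas.comp (measurable_pi_lambda _ fun j => hu _)
  have hint : ∀ f : Ω → E, Measurable (fun ω => Real.exp (-‖f ω‖)) →
      Integrable (fun ω => Real.exp (-‖f ω‖)) P := by
    intro f hf
    refine Integrable.of_bound hf.aestronglyMeasurable 1 (ae_of_all _ fun ω => ?_)
    rw [Real.norm_eq_abs, abs_of_pos (Real.exp_pos _), Real.exp_le_one_iff]; simp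
  have hpos : ∀ f : Ω → E, Measurable (fun ω => Real.exp (-‖f ω‖)) →
      0 < ∫ ω, Real.exp (-‖f ω‖) ∂P := fun f hf => integral_exp_pos (hint f hf)
  have key : ∀ k, |Real.log (∫ ω, Real.exp (-‖∑ n ∈ Finset.range k, F (fun j => u (n + j) ω)‖) ∂P)
      - Real.log (∫ ω, Real.exp (-‖aF F m (hist (fun j => u j ω) k)‖) ∂P)| ≤ C := by
    intro k
    have hp1 := hpos _ (hm1 k)
    have hp2 := hpos _ (hm2 k)
    have h1 : ∫ ω, Real.exp (-‖∑ n ∈ Finset.range k, F (fun j => u (n + j) ω)‖) ∂P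
        ≤ Real.exp C * ∫ ω, Real.exp (-‖aF F m (hist (fun j => u j ω) k)‖) ∂P := by
      rw [← integral_const_mul]
      refine integral_mono (hint _ (hm2 k)) ((hint _ (hm1 k)).const_mul _) fun ω => ?_
      refine exp_neg_norm_le ?_
      rw [norm_sub_rev]; exact aF_compare hF _ k
    have h2 : ∫ ω, Real.exp (-‖aF F m (hist (fun j => u j ω) k)‖) ∂P
        ≤ Real.exp C * ∫ ω, Real.exp (-‖∑ n ∈ Finset.range k, F (fun j => u (n + j) ω)‖) ∂P := by
      rw [← integral_const_mul]
      refine integral_mono (hint _ (hm1 k)) ((hint _ (hm2 k)).const_mul _) fun ω => ?_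
      exact exp_neg_norm_le (aF_compare hF _ k)
    have h3 := Real.log_le_log hp2 h1
    have h4 := Real.log_le_log hp1 h2
    rw [Real.log_mul (Real.exp_pos _).ne' hp1.ne', Real.log_exp] at h3
    rw [Real.log_mul (Real.exp_pos _).ne' hp2.ne', Real.log_exp] at h4
    rw [abs_le]; constructor <;> linarith
  have hz : Tendsto (fun k : ℕ => (Real.log (∫ ω, Real.exp (-‖∑ n ∈ Finset.range k, F (fun j => u (n + j) ω)‖) ∂P)
      - Real.log (∫ ω, Real.exp (-‖aF F m (hist (fun j => u j ω) k)‖) ∂P)) / k) atTop (𝓝 0) := by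
    refine squeeze_zero_norm (a := fun k : ℕ => C / k) (fun k => ?_) (tendsto_const_div_atTop_nhds_zero_nat C)
    rw [norm_div, Real.norm_natCast, Real.norm_eq_abs]
    exact div_le_div_of_nonneg_right (key k) (by positivity)
  have := hz.add hΛ
  rw [zero_add] at this
  refine this.congr fun k => ?_
  rw [← add_div]; congr 1; ring

end Functionals

set_option linter.unusedSectionVars false
section Topo
variable [MeasurableSpace H] [BorelSpace H] [SecondCountableTopology H]

/-- smooth approximation of the indicator of a closed box -/
def bx (C : ℕ → Set H) (n : ℕ) (x : ℕ → H) : ℝ :=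
  ∏ j ∈ Finset.range (n + 1),
    ((thickenedIndicator (Nat.one_div_pos_of_nat (α := ℝ) (n := n)) (C j) (x j) : ℝ≥0) : ℝ)

lemma bx_nonneg (C : ℕ → Set H) (n : ℕ) (x : ℕ → H) : 0 ≤ bx C n x :=
  Finset.prod_nonneg fun _ _ => NNReal.coe_nonneg _

lemma bx_le_one (C : ℕ → Set H) (n : ℕ) (x : ℕ → H) : bx C n x ≤ 1 :=
  Finset.prod_le_one (fun _ _ => NNReal.coe_nonneg _)
    (fun _ _ => by exact_mod_cast thickenedIndicator_le_one _ _ _)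

lemma bx_cont (C : ℕ → Set H) (n : ℕ) : Continuous (bx C n) := by
  unfold bx
  refine continuous_finsetProd _ fun j _ => ?_
  exact NNReal.continuous_coe.comp
    ((thickenedIndicator (Nat.one_div_pos_of_nat (α := ℝ) (n := n)) (C j)).continuous.comp
      (continuous_apply j))

lemma bx_good (C : ℕ → Set H) (n : ℕ) : ∃ L, GoodF (bx C n) n 1 L := by
  refine ⟨(((1 / ((n : ℝ) + 1)).toNNReal⁻¹ : ℝ≥0) : ℝ), zero_le_one, NNReal.coe_nonneg _, ?_, ?_,
    ?_, (bx_cont C n).measurable⟩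
  · intro x
    rw [Real.norm_of_nonneg (bx_nonneg _ _ _)]; exact bx_le_one _ _ _
  · intro x y h
    refine Finset.prod_congr rfl fun j hj => ?_
    rw [h j (by simp at hj; omega)]
  · intro i x y h
    by_cases hi : i ∈ Finset.range (n + 1)
    · unfold bx
      rw [← Finset.mul_prod_erase _ _ hi, ← Finset.mul_prod_erase _ (fun j => _) hi]
      have he : ∏ j ∈ (Finset.range (n + 1)).erase i,
          ((thickenedIndicator (Nat.one_div_pos_of_nat (α := ℝ) (n := n)) (C j) (y j) : ℝ≥0) : ℝ)
          = ∏ j ∈ (Finset.range (n + 1)).erase i,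
          ((thickenedIndicator (Nat.one_div_pos_of_nat (α := ℝ) (n := n)) (C j) (x j) : ℝ≥0) : ℝ) := by
        refine Finset.prod_congr rfl fun j hj => ?_
        rw [h j (Finset.ne_of_mem_erase hj)]
      rw [he, ← sub_mul, norm_mul]
      have h1 := (lipschitzWith_thickenedIndicator
        (Nat.one_div_pos_of_nat (α := ℝ) (n := n)) (C i)).dist_le_mul (x i) (y i)
      rw [NNReal.dist_eq, dist_eq_norm] at h1
      refine le_trans (mul_le_of_le_one_right (norm_nonneg _) ?_) h1
      rw [Real.norm_of_nonneg (Finset.prod_nonneg fun _ _ => NNReal.coe_nonneg _)]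
      exact Finset.prod_le_one (fun _ _ => NNReal.coe_nonneg _)
        (fun _ _ => by exact_mod_cast thickenedIndicator_le_one _ _ _)
    · have : bx C n x = bx C n y := by
        refine Finset.prod_congr rfl fun j hj => ?_
        rw [h j (fun hji => hi (hji ▸ hj))]
      rw [this, sub_self, norm_zero]; positivity

lemma bx_tendsto (C : ℕ → Set H) (hC : ∀ j, IsClosed (C j)) (x : ℕ → H) :
    Tendsto (fun n => bx C n x) atTop (𝓝 ((Set.univ.pi C).indicator (fun _ => (1 : ℝ)) x)) := by
  by_cases hx : x ∈ Set.univ.pi C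
  · rw [Set.indicator_of_mem hx]
    have : (fun n => bx C n x) = fun _ => (1 : ℝ) := by
      funext n
      refine Finset.prod_eq_one fun j _ => ?_
      rw [thickenedIndicator_one _ _ (hx j trivial)]; rfl
    rw [this]; exact tendsto_const_nhds
  · rw [Set.indicator_of_notMem hx]
    obtain ⟨j, hj⟩ : ∃ j, x j ∉ C j := by
      by_contra hcon; push Not at hcon; exact hx fun j _ => hcon j
    have h1 := thickenedIndicator_tendsto_indicator_closure
      (δseq := fun n : ℕ => 1 / ((n : ℝ) + 1)) (fun n => Nat.one_div_pos_of_nat)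
      tendsto_one_div_add_atTop_nhds_zero_nat (C j)
    have h2 := (tendsto_pi_nhds.1 h1) (x j)
    rw [(hC j).closure_eq, Set.indicator_of_notMem hj] at h2
    have h3 := (NNReal.continuous_coe.tendsto 0).comp h2
    refine tendsto_of_tendsto_of_tendsto_of_le_of_le' tendsto_const_nhds h3
      (Eventually.of_forall fun n => bx_nonneg _ _ _) ?_
    filter_upwards [eventually_ge_atTop j] with n hn
    unfold bx
    rw [← Finset.mul_prod_erase _ _ (Finset.mem_range.2 (by omega : j < n + 1))]
    refine mul_le_of_le_one_right (NNReal.coe_nonneg _) ?_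
    exact Finset.prod_le_one (fun _ _ => NNReal.coe_nonneg _)
        (fun _ _ => by exact_mod_cast thickenedIndicator_le_one _ _ _)

lemma pi_gen : (MeasurableSpace.pi : MeasurableSpace (ℕ → H))
    = MeasurableSpace.generateFrom
      (Set.univ.pi '' (Set.univ.pi fun _ : ℕ => {s : Set H | IsClosed s})) := by
  apply le_antisymm
  · refine iSup_le fun i => ?_
    rw [BorelSpace.measurable_eq (α := H), borel_eq_generateFrom_isClosed,
      MeasurableSpace.comap_generateFrom]
    refine MeasurableSpace.generateFrom_mono ?_
    rintro _ ⟨s, hs, rfl⟩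
    refine ⟨Function.update (fun _ => Set.univ) i s, ?_, ?_⟩
    · intro j _
      by_cases hj : j = i
      · subst hj; simpa using hs
      · simp [hj]
    · exact Set.univ_pi_update_univ (α := fun _ : ℕ => H) i s
  · refine MeasurableSpace.generateFrom_le ?_
    rintro _ ⟨s, hs, rfl⟩
    exact MeasurableSet.univ_pi fun j => IsClosed.measurableSet (hs j trivial)

lemma box_lim (σ : Measure (ℕ → H)) [IsProbabilityMeasure σ] (C : ℕ → Set H)
    (hC : ∀ j, IsClosed (C j)) :
    Tendsto (fun n => ∫ x, bx C n x ∂σ) atTop (𝓝 (σ.real (Set.univ.pi C))) := by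
  have hm : MeasurableSet (Set.univ.pi C) := MeasurableSet.univ_pi fun j => (hC j).measurableSet
  rw [← integral_indicator_one hm]
  refine tendsto_integral_of_dominated_convergence (fun _ => (1 : ℝ))
    (fun n => (bx_cont C n).measurable.aestronglyMeasurable) (integrable_const _) ?_ ?_
  · intro n; refine Eventually.of_forall fun x => ?_
    rw [Real.norm_of_nonneg (bx_nonneg _ _ _)]; exact bx_le_one _ _ _
  · exact Eventually.of_forall fun x => bx_tendsto C hC x

lemma sep {σ τ : ProbabilityMeasure (ℕ → H)} (hne : σ ≠ τ) :
    ∃ (f : (ℕ → H) → ℝ) (m : ℕ) (B L : ℝ), GoodF f m B L ∧ Continuous f ∧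
      ∫ x, f x ∂(σ : Measure (ℕ → H)) ≠ ∫ x, f x ∂(τ : Measure (ℕ → H)) := by
  by_contra hcon
  push Not at hcon
  apply hne
  apply Subtype.ext
  have : IsProbabilityMeasure σ.1 := σ.2
  have : IsProbabilityMeasure τ.1 := τ.2
  refine ext_of_generate_finite _ pi_gen (IsPiSystem.pi fun _ => isPiSystem_isClosed) ?_ (by simp)
  rintro _ ⟨C, hC, rfl⟩
  have hC' : ∀ j, IsClosed (C j) := fun j => hC j trivial
  have h1 := box_lim (σ : Measure (ℕ → H)) C hC'
  have h2 := box_lim (τ : Measure (ℕ → H)) C hC'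
  have h3 : (fun n => ∫ x, bx C n x ∂(σ : Measure (ℕ → H)))
      = fun n => ∫ x, bx C n x ∂(τ : Measure (ℕ → H)) := by
    funext n
    obtain ⟨L, hL⟩ := bx_good C n
    exact hcon _ _ _ _ hL (bx_cont C n)
  rw [h3] at h1
  have := tendsto_nhds_unique h1 h2
  exact (measureReal_eq_measureReal_iff).1 this

lemma GoodF.affine {f : (ℕ → H) → ℝ} {m : ℕ} {B L : ℝ} (hf : GoodF f m B L) (κ v : ℝ) :
    GoodF (fun x => κ * (f x - v)) m (|κ| * (B + |v|)) (|κ| * L) := by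
  refine ⟨by have := hf.hB; positivity, by have := hf.hL; positivity, ?_, ?_, ?_, ?_⟩
  · intro x
    rw [norm_mul, Real.norm_eq_abs κ]
    refine mul_le_mul_of_nonneg_left ?_ (abs_nonneg _)
    exact (norm_sub_le _ _).trans (add_le_add (hf.bd x) le_rfl)
  · intro x y h; simp only [hf.dep x y h]
  · intro i x y h
    have : κ * (f x - v) - κ * (f y - v) = κ * (f x - f y) := by ring
    rw [this, norm_mul, Real.norm_eq_abs κ, mul_assoc]
    exact mul_le_mul_of_nonneg_left (hf.lip i x y h) (abs_nonneg _)
  · have := hf.meas; fun_prop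

lemma GoodF.smul {ι : Type} [Fintype ι] {F : (ℕ → H) → (ι → ℝ)} {m : ℕ} {B L : ℝ}
    (hf : GoodF F m B L) (κ : ℝ) :
    GoodF (fun x => κ • F x) m (|κ| * B) (|κ| * L) := by
  refine ⟨by have := hf.hB; positivity, by have := hf.hL; positivity, ?_, ?_, ?_, ?_⟩
  · intro x
    rw [norm_smul, Real.norm_eq_abs κ]
    exact mul_le_mul_of_nonneg_left (hf.bd x) (abs_nonneg _)
  · intro x y h; simp only [hf.dep x y h]
  · intro i x y h
    rw [← smul_sub, norm_smul, Real.norm_eq_abs κ, mul_assoc]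
    exact mul_le_mul_of_nonneg_left (hf.lip i x y h) (abs_nonneg _)
  · exact hf.meas.const_smul κ

lemma GoodF.family {ι : Type} [Fintype ι] {f : ι → (ℕ → H) → ℝ} {m : ι → ℕ} {B L : ι → ℝ}
    (hf : ∀ i, GoodF (f i) (m i) (B i) (L i)) :
    GoodF (fun x i => f i x) (∑ i, m i) (∑ i, B i) (∑ i, L i) := by
  have hB : 0 ≤ ∑ i, B i := Finset.sum_nonneg fun i _ => (hf i).hB
  have hL : 0 ≤ ∑ i, L i := Finset.sum_nonneg fun i _ => (hf i).hL
  refine ⟨hB, hL, ?_, ?_, ?_, ?_⟩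
  · intro x
    refine (pi_norm_le_iff_of_nonneg hB).2 fun i => ((hf i).bd x).trans ?_
    exact Finset.single_le_sum (f := B) (fun i _ => (hf i).hB) (Finset.mem_univ i)
  · intro x y h
    funext i
    refine (hf i).dep x y fun j hj => h j (hj.trans ?_)
    exact Finset.single_le_sum (f := m) (fun i _ => Nat.zero_le _) (Finset.mem_univ i)
  · intro k x y h
    refine (pi_norm_le_iff_of_nonneg (by positivity)).2 fun i => ((hf i).lip k x y h).trans ?_
    refine mul_le_mul_of_nonneg_right ?_ (norm_nonneg _)
    exact Finset.single_le_sum (f := L) (fun i _ => (hf i).hL) (Finset.mem_univ i)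
  · exact measurable_pi_lambda _ fun i => (hf i).meas

lemma GoodF.cont_int {f : (ℕ → H) → ℝ} {m : ℕ} {B L : ℝ} (hf : GoodF f m B L)
    (hc : Continuous f) :
    Continuous (fun σ : ProbabilityMeasure (ℕ → H) => ∫ x, f x ∂(σ : Measure (ℕ → H))) :=
  ProbabilityMeasure.continuous_integral_boundedContinuousFunction
    (BoundedContinuousFunction.ofNormedAddCommGroup f hc B hf.bd)

/-- measures carried by `A^ℕ` -/
def CA (A : Set H) : Set (ProbabilityMeasure (ℕ → H)) :=
  {σ | (σ : Measure (ℕ → H)) (Set.univ.pi fun _ => A)ᶜ = 0}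

lemma CA_compact {A : Set H} (hA : IsCompact A) : IsCompact (CA A) := by
  have h := isCompact_setOfPred_probabilityMeasure_mass_eq_compl_isCompact_le
    (E := ℕ → H) (u := fun _ => 0) (K := fun _ => Set.univ.pi fun _ => A) tendsto_const_nhds
    (fun _ => isCompact_univ_pi fun _ => hA) (Or.inl inferInstance)
  convert h using 1
  ext σ
  simp only [CA, Set.mem_ofPred_eq, nonpos_iff_eq_zero, forall_const]
  rw [ProbabilityMeasure.null_iff_toMeasure_null]

lemma nbhd_lemma {A : Set H} (hA : IsCompact A) {σ : ProbabilityMeasure (ℕ → H)}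
    {U : Set (ProbabilityMeasure (ℕ → H))} (hU : IsOpen U) (hσ : σ ∈ U) :
    ∃ (ι : Type) (_ : Fintype ι) (F : (ℕ → H) → (ι → ℝ)) (m : ℕ) (B L : ℝ), GoodF F m B L ∧
      (∀ i, Continuous (fun x => F x i)) ∧
      (∀ i, Continuous (fun τ : ProbabilityMeasure (ℕ → H) =>
          ∫ x, F x i ∂(τ : Measure (ℕ → H)))) ∧
      (∀ i, ∫ x, F x i ∂(σ : Measure (ℕ → H)) = 0) ∧
      ∀ τ ∈ CA A, (∀ i, |∫ x, F x i ∂(τ : Measure (ℕ → H))| < 1) → τ ∈ U := by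
  have hcpt : IsCompact (CA A \ U) := (CA_compact hA).diff hU
  have hex : ∀ τ ∈ CA A \ U, ∃ (f : (ℕ → H) → ℝ) (m : ℕ) (B L : ℝ), GoodF f m B L ∧
      Continuous f ∧ ∫ x, f x ∂(σ : Measure (ℕ → H)) = 0 ∧
      1 < |∫ x, f x ∂(τ : Measure (ℕ → H))| := by
    intro τ hτ
    have hne : σ ≠ τ := fun h => hτ.2 (h ▸ hσ)
    obtain ⟨f, m, B, L, hf, hc, hint⟩ := sep hne
    set v := ∫ x, f x ∂(σ : Measure (ℕ → H)) with hv
    set w := ∫ x, f x ∂(τ : Measure (ℕ → H)) with hw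
    have hI : ∀ ρ : ProbabilityMeasure (ℕ → H), ∫ x, 2 / (w - v) * (f x - v) ∂(ρ : Measure (ℕ → H))
        = 2 / (w - v) * (∫ x, f x ∂(ρ : Measure (ℕ → H)) - v) := by
      intro ρ
      have hi : Integrable f (ρ : Measure (ℕ → H)) :=
        Integrable.of_bound hf.meas.aestronglyMeasurable B (Eventually.of_forall hf.bd)
      rw [integral_const_mul, integral_sub hi (integrable_const _)]; simp
    refine ⟨fun x => 2 / (w - v) * (f x - v), m, _, _, hf.affine _ _, by fun_prop, ?_, ?_⟩
    · rw [hI, ← hv, sub_self, mul_zero]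
    · rw [hI, ← hw, div_mul_cancel₀ _ (sub_ne_zero.2 hint.symm)]; norm_num
  choose! f m B L hf hc h0 h1 using hex
  obtain ⟨t, ht⟩ := hcpt.elim_nhds_subcover'
    (fun τ _ => {ρ : ProbabilityMeasure (ℕ → H) | 1 < |∫ x, f τ x ∂(ρ : Measure (ℕ → H))|})
    (fun τ hτ => (isOpen_lt continuous_const
      (((hf τ hτ).cont_int (hc τ hτ)).abs)).mem_nhds (h1 τ hτ))
  obtain ⟨n, ⟨eq⟩⟩ : ∃ n, Nonempty (t ≃ Fin n) := ⟨_, ⟨Fintype.equivFin _⟩⟩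
  have hmem : ∀ i : Fin n, ((eq.symm i).1 : ProbabilityMeasure (ℕ → H)) ∈ CA A \ U :=
    fun i => (eq.symm i).1.2
  refine ⟨Fin n, inferInstance, fun x i => f (eq.symm i).1 x, _, _, _,
    GoodF.family (fun i => hf _ (hmem i)), fun i => hc _ (hmem i),
    fun i => (hf _ (hmem i)).cont_int (hc _ (hmem i)), fun i => h0 _ (hmem i), ?_⟩
  intro τ hτ hlt
  by_contra hτU
  have := ht ⟨hτ, hτU⟩
  simp only [Set.mem_iUnion, Set.mem_ofPred_eq] at this
  obtain ⟨x, hx, hgt⟩ := this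
  have h2 := hlt (eq ⟨x, hx⟩)
  simp only [Equiv.symm_apply_apply] at h2
  exact absurd hgt (not_lt.2 h2.le)

lemma occ_integral (x : ℕ → ℕ → H) {k : ℕ} (hk : k ≠ 0) {f : (ℕ → H) → ℝ} (hf : Measurable f) :
    ∫ y, f y ∂((occ x k : ProbabilityMeasure (ℕ → H)) : Measure (ℕ → H))
      = (k : ℝ)⁻¹ * ∑ n ∈ Finset.range k, f (x n) := by
  have : ((occ x k : ProbabilityMeasure (ℕ → H)) : Measure (ℕ → H))
      = (k : ℝ≥0∞)⁻¹ • ∑ n ∈ Finset.range k, Measure.dirac (x n) := by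
    exact congrArg Subtype.val (dif_neg hk)
  rw [this, integral_smul_measure, integral_finsetSum_measure]
  · simp [integral_dirac]
  · intro n _; exact integrable_dirac (by simp)

lemma occ_mem_CA {A : Set H} (hAc : IsClosed A) (x : ℕ → ℕ → H) (hx : ∀ n j, x n j ∈ A) (k : ℕ) :
    occ x k ∈ CA A := by
  have hm : MeasurableSet (Set.univ.pi fun _ : ℕ => A) :=
    MeasurableSet.univ_pi fun _ => hAc.measurableSet
  have hd : ∀ n, Measure.dirac (x n) (Set.univ.pi fun _ : ℕ => A)ᶜ = 0 := by
    intro n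
    rw [Measure.dirac_apply' _ hm.compl, Set.indicator_of_notMem]
    simpa using hx n
  change ((occ x k : ProbabilityMeasure (ℕ → H)) : Measure (ℕ → H)) _ = 0
  by_cases hk : k = 0
  · have : ((occ x k : ProbabilityMeasure (ℕ → H)) : Measure (ℕ → H)) = Measure.dirac (x 0) :=
      congrArg Subtype.val (dif_pos hk)
    rw [this]; exact hd 0
  · have : ((occ x k : ProbabilityMeasure (ℕ → H)) : Measure (ℕ → H))
      = (k : ℝ≥0∞)⁻¹ • ∑ n ∈ Finset.range k, Measure.dirac (x n) :=
      congrArg Subtype.val (dif_neg hk)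
    rw [this]
    change ((k : ℝ≥0∞)⁻¹ • ∑ n ∈ Finset.range k, Measure.dirac (x n)) _ = 0
    simp [Measure.smul_apply, Measure.finset_sum_apply, hd]

end Topo

section LocalEst

lemma local_est {Ω : Type} [MeasurableSpace Ω] {P : Measure Ω} [IsProbabilityMeasure P]
    (D : ℕ → Ω → ℝ) (hD0 : ∀ k ω, 0 ≤ D k ω) (hDm : ∀ k, Measurable (D k)) (q : ℕ → ℝ≥0∞)
    (hΛ : ∀ κ : ℝ, 0 < κ → ∃ Λ : ℝ,
      Tendsto (fun k : ℕ => Real.log (∫ ω, Real.exp (-(κ * D k ω)) ∂P) / k) atTop (𝓝 Λ))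
    (J : ℝ) (hJ : ∀ ε : ℝ, 0 < ε →
      (J : EReal) ≤ ExpGrowth.expGrowthSup (fun k : ℕ => P {ω | D k ω < ε * k}))
    (hq : ∀ k : ℕ, 1 ≤ k → P {ω | D k ω < k} ≤ q k) :
    (J : EReal) ≤ ExpGrowth.expGrowthInf q := by
  have hint : ∀ κ : ℝ, 0 < κ → ∀ k, Integrable (fun ω => Real.exp (-(κ * D k ω))) P := by
    intro κ hκ k
    refine Integrable.of_bound (C := 1) ?_ (Eventually.of_forall fun ω => ?_)
    · exact (Real.measurable_exp.comp ((hDm k).const_mul κ).neg).aestronglyMeasurable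
    · rw [Real.norm_of_nonneg (Real.exp_pos _).le, Real.exp_le_one_iff]
      have := mul_nonneg hκ.le (hD0 k ω); linarith
  have hpos : ∀ κ : ℝ, 0 < κ → ∀ k, 0 < ∫ ω, Real.exp (-(κ * D k ω)) ∂P :=
    fun κ hκ k => integral_exp_pos (hint κ hκ k)
  have hcast : ∀ (z : ℝ) (k : ℕ), EReal.exp ((z : EReal) * (k : EReal))
      = ENNReal.ofReal (Real.exp (z * k)) := by
    intro z k
    rw [← EReal.exp_coe]; norm_cast
  -- step 1
  have hstep : ∀ κ : ℝ, 0 < κ → ∀ Λ : ℝ,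
      Tendsto (fun k : ℕ => Real.log (∫ ω, Real.exp (-(κ * D k ω)) ∂P) / k) atTop (𝓝 Λ) →
      J ≤ Λ := by
    intro κ hκ Λ hlim
    by_contra hlt
    push Not at hlt
    set s := (J - Λ) / 4 with hs
    have hs0 : 0 < s := by rw [hs]; linarith
    have hle : ExpGrowth.expGrowthSup (fun k : ℕ => P {ω | D k ω < s / κ * k})
        ≤ ((Λ + 2 * s : ℝ) : EReal) := by
      refine Eventually.expGrowthSup_le ?_
      filter_upwards [hlim.eventually_lt_const (show Λ < Λ + s by linarith),
        eventually_gt_atTop 0] with k hk hk0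
      have hk0' : (0 : ℝ) < k := by exact_mod_cast hk0
      rw [hcast]
      rw [div_lt_iff₀ hk0', Real.log_lt_iff_lt_exp (hpos κ hκ k)] at hk
      have hmeas : MeasurableSet {ω | D k ω < s / κ * k} :=
        measurableSet_lt (hDm k) measurable_const
      rw [ENNReal.le_ofReal_iff_toReal_le (measure_ne_top _ _) (Real.exp_pos _).le]
      have h1 : P.real {ω | D k ω < s / κ * k} * Real.exp (-(s * k))
          ≤ ∫ ω, Real.exp (-(κ * D k ω)) ∂P := by
        rw [← smul_eq_mul, ← setIntegral_const]
        refine (setIntegral_mono_on (integrable_const _).integrableOn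
          (hint κ hκ k).integrableOn hmeas ?_).trans
          (setIntegral_le_integral (hint κ hκ k)
            (Eventually.of_forall fun ω => (Real.exp_pos _).le))
        intro ω hω
        refine Real.exp_le_exp.2 (neg_le_neg ?_)
        have : D k ω < s / κ * k := hω
        have h2 := mul_le_mul_of_nonneg_left this.le hκ.le
        calc κ * D k ω ≤ κ * (s / κ * k) := h2
          _ = s * k := by field_simp
      change P.real {ω | D k ω < s / κ * k} ≤ _
      calc P.real {ω | D k ω < s / κ * k}
          = (P.real {ω | D k ω < s / κ * k} * Real.exp (-(s * k))) * Real.exp (s * k) := by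
            rw [mul_assoc, ← Real.exp_add]; simp
        _ ≤ Real.exp ((Λ + s) * k) * Real.exp (s * k) :=
            mul_le_mul_of_nonneg_right (h1.trans hk.le) (Real.exp_pos _).le
        _ = Real.exp ((Λ + 2 * s) * k) := by rw [← Real.exp_add]; ring_nf
    have := (hJ (s / κ) (by positivity)).trans hle
    have := EReal.coe_le_coe_iff.1 this
    linarith
  -- step 2
  set κ := |J| + 2 with hκd
  have hκ : 0 < κ := by positivity
  obtain ⟨Λ, hlim⟩ := hΛ κ hκ
  have hJΛ := hstep κ hκ Λ hlim
  by_contra hcon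
  push Not at hcon
  obtain ⟨z, hz1, hz2⟩ := EReal.lt_iff_exists_real_btwn.1 hcon
  have hzJ : z < J := EReal.coe_lt_coe_iff.1 hz2
  set s := min 1 ((J - z) / 2) with hs
  have hs0 : 0 < s := lt_min one_pos (by linarith)
  have hs1 : s ≤ 1 := min_le_left _ _
  have hs2 : z ≤ J - 2 * s := by have := min_le_right 1 ((J - z) / 2); linarith
  refine absurd hz1 (not_lt.2 ?_)
  refine Eventually.le_expGrowthInf ?_
  have hks : ∀ᶠ k : ℕ in atTop, 1 / s ≤ (k : ℝ) :=
    tendsto_natCast_atTop_atTop.eventually_ge_atTop _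
  filter_upwards [hlim.eventually_const_lt (show J - s < Λ by linarith),
    eventually_ge_atTop 1, hks] with k hk hk1 hks
  have hk0' : (1 : ℝ) ≤ k := by exact_mod_cast hk1
  rw [hcast]
  refine le_trans ?_ (hq k hk1)
  rw [lt_div_iff₀ (by linarith), Real.lt_log_iff_exp_lt (hpos κ hκ k)] at hk
  have hmeas : MeasurableSet {ω | D k ω < k} := measurableSet_lt (hDm k) measurable_const
  rw [ENNReal.ofReal_le_iff_le_toReal (measure_ne_top _ _)]
  change _ ≤ P.real {ω | D k ω < k}
  have h1 : ∫ ω, Real.exp (-(κ * D k ω)) ∂P ≤ P.real {ω | D k ω < k} + Real.exp (-(κ * k)) := by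
    have h2 : ∀ ω, Real.exp (-(κ * D k ω))
        ≤ Set.indicator {ω | D k ω < k} 1 ω + Real.exp (-(κ * k)) := by
      intro ω
      by_cases hω : D k ω < k
      · rw [Set.indicator_of_mem (show ω ∈ {ω | D k ω < k} from hω)]
        have : Real.exp (-(κ * D k ω)) ≤ 1 := by
          rw [Real.exp_le_one_iff]
          have := mul_nonneg hκ.le (hD0 k ω); linarith
        have := Real.exp_pos (-(κ * k))
        simp only [Pi.one_apply]; linarith
      · rw [Set.indicator_of_notMem (show ω ∉ {ω | D k ω < k} from hω), zero_add]
        refine Real.exp_le_exp.2 (neg_le_neg ?_)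
        exact mul_le_mul_of_nonneg_left (not_lt.1 hω) hκ.le
    have hi : Integrable (Set.indicator {ω | D k ω < k} (1 : Ω → ℝ)) P :=
      (integrable_const (1 : ℝ)).indicator hmeas
    refine (integral_mono (hint κ hκ k) (hi.add (integrable_const _)) h2).trans ?_
    have := integral_add hi (integrable_const (Real.exp (-(κ * k))))
    simp only [Pi.add_apply] at this ⊢
    rw [this, integral_indicator_one hmeas]; simp
  have h3 : Real.exp (-(κ * k)) ≤ Real.exp ((J - s) * k) * Real.exp (-1) := by
    rw [← Real.exp_add]
    refine Real.exp_le_exp.2 ?_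
    have : 1 ≤ κ + J - s := by have := neg_abs_le J; linarith
    nlinarith
  have h4 : Real.exp (z * k) ≤ Real.exp ((J - s) * k) * Real.exp (-1) := by
    rw [← Real.exp_add]
    refine Real.exp_le_exp.2 ?_
    have : 1 ≤ s * k := by rw [div_le_iff₀ hs0] at hks; linarith
    nlinarith
  have h5 : Real.exp (-1) ≤ 1 / 2 := by
    rw [Real.exp_neg, inv_le_comm₀ (Real.exp_pos _) (by norm_num)]
    have := Real.add_one_le_exp (1 : ℝ); norm_num at this ⊢; linarith
  have h6 := Real.exp_pos ((J - s) * k)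
  nlinarith

end LocalEst

/-- **Theorem 1.3 / Theorem B (process-level LDP)**: under Conditions (A)–(D) with `b_j ≠ 0`,
for any initial state whose law is supported by `𝒜`, the occupation measures
`𝜻_k = k⁻¹ ∑_{n=0}^{k-1} δ_{𝐮_n}` on `𝐇 = H^{ℤ₊}` (with the Tikhonov topology), where
`𝐮_n = (u_j, j ≥ n)`, satisfy the LDP with a good rate function
`𝐈 : 𝒫(𝐇) → [0,∞]` which equals `+∞` outside a compact subset of `𝒫(𝐇)`. -/
theorem statement4
    {H : Type} [NormedAddCommGroup H] [InnerProductSpace ℝ H] [CompleteSpace H]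
    [SecondCountableTopology H] [MeasurableSpace H] [BorelSpace H]
    {Ω : Type} [MeasurableSpace Ω] (P : Measure Ω) [IsProbabilityMeasure P]
    (S : H → H) (e : HilbertBasis ℕ ℝ H)
    (η : ℕ → Ω → H) (hηmeas : ∀ k, Measurable (η k))
    (b : ℕ → ℝ) (ξ : ℕ → ℕ → Ω → ℝ) (p : ℕ → ℝ → ℝ)
    (K : Set H) (hK : K = msupp (Measure.map (η 1) P)) (hKcomp : IsCompact K)
    (hA : CondA S) (hB : CondB S K) (hC : CondC S e) (hD : CondD P e η b ξ p)
    (hb : ∀ j, b j ≠ 0)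
    (u₀ : Ω → H) (hu₀ : Measurable u₀)
    (hindep : IndepFun u₀ (fun ω (k : ℕ) => η k ω) P)
    (hsupp : Measure.map u₀ P (attainDom S K {0}) = 1) :
    ∃ I : ProbabilityMeasure (ℕ → H) → ℝ≥0∞,
      GoodRate I ∧
      (∃ C : Set (ProbabilityMeasure (ℕ → H)), IsCompact C ∧ ∀ σ ∉ C, I σ = ⊤) ∧
      LDPof
        (fun k F =>
          P {ω | occ (fun n (j : ℕ) => traj S η u₀ (n + j) ω) k ∈ F}) I := by
  have hS : Continuous S := hA.1.continuous
  have hSm : Measurable S := hS.measurable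
  set A := attainDom S K {0} with hAdef
  have hAc : IsCompact A := A_compact hKcomp hA hB hC
  have hne : A.Nonempty := ⟨0, zero_mem_A⟩
  have hinvK : ∀ x ∈ A, ∀ h ∈ K, S x + h ∈ A := fun x hx h hh => A_inv hS hx hh
  set ν := Measure.map (η 1) P with hν
  have hνp : IsProbabilityMeasure ν := Measure.isProbabilityMeasure_map (hηmeas 1).aemeasurable
  have hKae : ∀ᵐ h ∂ν, h ∈ K := by rw [hK]; exact msupp_ae ν
  have hinv : ∀ x ∈ A, ∀ᵐ h ∂ν, S x + h ∈ A := fun x hx => by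
    filter_upwards [hKae] with h hh using hinvK x hx h hh
  have hO : OneStep S ν A := oneStep_A hD hηmeas hb hA hC hAc hne hinv
  have hDo : Doeblin S ν A := by
    refine doeblin_A hA hAc hinv ?_ ?_
    · intro h hh δ hδ
      rw [hK] at hh
      exact hh _ (Metric.ball_mem_nhds h hδ)
    · rw [hK]; exact zero_mem_msupp hD hηmeas
  have hlp : IsProbabilityMeasure (Measure.map u₀ P) :=
    Measure.isProbabilityMeasure_map hu₀.aemeasurable
  have hlam : ∀ᵐ x ∂(Measure.map u₀ P), x ∈ A := by
    rw [ae_iff]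
    exact (prob_compl_eq_zero_iff hAc.measurableSet).2 hsupp
  have huA : ∀ᵐ ω ∂P, ∀ n, traj S η u₀ n ω ∈ A :=
    traj_mem hD hηmeas hinvK hKae u₀ (ae_of_ae_map hu₀.aemeasurable hlam)
  have hum : ∀ k, Measurable (traj S η u₀ k) := fun k =>
    traj_meas_sub hSm k hu₀ (fun k _ _ => hηmeas k)
  have hlim : ∀ (Ψ : List H → ℝ) (L c c' : ℝ), GoodPsi Ψ L c c' → ∃ Λ : ℝ,
      Tendsto (fun k : ℕ => Real.log (∫ ω, Ψ (hist (fun j => traj S η u₀ j ω) k) ∂P) / k)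
        atTop (𝓝 Λ) := by
    intro Ψ L c c' hΨ
    obtain ⟨Λ, hΛ⟩ := Rop_limit hSm hΨ hAc hne hinv hO hDo (Measure.map u₀ P) hlam
    refine ⟨Λ, hΛ.congr' ?_⟩
    filter_upwards [eventually_ge_atTop 1] with k hk
    obtain ⟨m, rfl⟩ : ∃ m, k = m + 1 := ⟨k - 1, by omega⟩
    rw [link hD hηmeas hSm hΨ u₀ hu₀ hindep m, Nat.add_sub_cancel]
  refine ldp_abstract (fun k F =>
          P {ω | occ (fun n (j : ℕ) => traj S η u₀ (n + j) ω) k ∈ F}) ?_ ?_ ?_ (CA A)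
    (CA_compact hAc) (CA_compact hAc).isClosed ?_ ?_
  · intro k F F' h
    exact measure_mono fun ω hω => h hω
  · intro k F F'
    exact measure_union_le _ _
  · intro k F
    exact prob_le_one
  · intro k
    have : ∀ᵐ ω ∂P, occ (fun n (j : ℕ) => traj S η u₀ (n + j) ω) k ∈ CA A := by
      filter_upwards [huA] with ω hω
      exact occ_mem_CA hAc.isClosed _ (fun n j => hω (n + j)) k
    exact this
  · intro σ hσ G hG hσG J hJ
    obtain ⟨ι, _, F, m, B, L, hF, hFc, hFi, hF0, hFU⟩ := nbhd_lemma hAc hG hσG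
    have hFm : ∀ i, Measurable (fun x => F x i) := fun i => (hFc i).measurable
    set D : ℕ → Ω → ℝ := fun k ω =>
      ‖∑ n ∈ Finset.range k, F (fun j => traj S η u₀ (n + j) ω)‖ with hDd
    have hkey : ∀ k : ℕ, 1 ≤ k → ∀ ε : ℝ, 0 < ε → ∀ ω,
        (∀ i, |∫ x, F x i ∂((occ (fun n (j : ℕ) => traj S η u₀ (n + j) ω) k :
          ProbabilityMeasure (ℕ → H)) : Measure (ℕ → H))| < ε) ↔ D k ω < ε * k := by
      intro k hk ε hε ω
      have hk0 : (0 : ℝ) < k := by exact_mod_cast hk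
      rw [hDd]
      simp only
      rw [pi_norm_lt_iff (by positivity)]
      refine forall_congr' fun i => ?_
      rw [occ_integral _ (by omega) (hFm i), abs_mul, abs_of_pos (inv_pos.2 hk0),
        inv_mul_lt_iff₀ hk0, Finset.sum_apply, Real.norm_eq_abs, mul_comm]
    refine local_est (P := P) D (fun k ω => norm_nonneg _) ?_ _ ?_ J ?_ ?_
    · intro k
      refine Measurable.norm ?_
      refine Finset.measurable_fun_sum _ fun n _ => ?_
      exact hF.meas.comp (measurable_pi_lambda _ fun j => hum (n + j))
    · intro κ hκ
      obtain ⟨Λ, hΛ⟩ := scgf (P := P) hum hlim (hF.smul κ)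
      refine ⟨Λ, ?_⟩
      convert hΛ using 6 with k
      rw [← Finset.smul_sum, norm_smul, Real.norm_of_nonneg hκ.le]
    · intro ε hε
      refine (hJ {τ | ∀ i, |∫ x, F x i ∂(τ : Measure (ℕ → H))| < ε} ?_ ?_).trans ?_
      · rw [Set.ofPred_forall]
        exact isOpen_iInter_of_finite fun i => isOpen_lt (hFi i).abs continuous_const
      · intro i; rw [hF0 i]; simpa using hε
      · refine ExpGrowth.expGrowthSup_eventually_monotone ?_
        filter_upwards [eventually_ge_atTop 1] with k hk
        exact measure_mono fun ω hω => (hkey k hk ε hε ω).1 hω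
    · intro k hk
      refine measure_mono_ae ?_
      filter_upwards [huA] with ω hω hlt
      refine hFU _ (occ_mem_CA hAc.isClosed _ (fun n j => hω (n + j)) k) ?_
      exact (hkey k hk 1 one_pos ω).2 (by rw [one_mul]; exact hlt)
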